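/- Let n ≥ 1 and let λ = (1^{m₁} 2^{m₂} ⋯ n^{m_n}) be a partition of n (so Σ_i i·m_i = n). For integers i ≥ 1 and k ≥ 0, define g_{i,k} = (1/(2i)) Σ_{d ∣ i, d odd} μ(d) (2k)^{i/d}, a nonnegative integer, and for integers g, m ≥ 0 let N(g,m) denote the coefficient of u^m in the formal power series (1+u)^g (1−u)^{−g} ∈ ℚ[[u]]. Then the following identity of formal power series in ℚ[[t]] holds: (1/2) Σ_{π ∈ S_n, cycle type(π) = λ} 4^{pk(π)+1} t^{pk(π)+1} (1+t)^{n−1−2·pk(π)} = (1−t)^{n+1} · Σ_{k ≥ 0} t^k · Π_{1 ≤ i ≤ n, m_i ≥ 1} N(g_{i,k}, m_i). (This is the Diaconis–Fulman–Holmes formula (1/2)((1+t)/(1−t))^{n+1} Σ_{π: cycle type λ} (4t/(1+t)²)^{pk(π)+1} = Σ_{k≥0} t^k Π_i N(g_{i,k}, m_i) with denominators cleared; note 2·pk(π) ≤ n−1 for every π ∈ S_n.) -/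

import Mathlib

open scoped Classical

noncomputable section

def oneLine (n : ℕ) (π : Equiv.Perm (Fin n)) (i : ℕ) : ℕ :=
  if h : 1 ≤ i ∧ i ≤ n then (π ⟨i - 1, by omega⟩).val + 1 else 0

def des (n : ℕ) (π : Equiv.Perm (Fin n)) : ℕ :=
  ((Finset.Icc 1 (n - 1)).filter fun i => oneLine n π (i + 1) < oneLine n π i).card

def pk (n : ℕ) (π : Equiv.Perm (Fin n)) : ℕ :=
  ((Finset.Icc 2 (n - 1)).filter fun i =>
    oneLine n π (i - 1) < oneLine n π i ∧ oneLine n π (i + 1) < oneLine n π i).card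

def lpk (n : ℕ) (π : Equiv.Perm (Fin n)) : ℕ :=
  ((Finset.Icc 1 (n - 1)).filter fun i =>
    oneLine n π (i - 1) < oneLine n π i ∧ oneLine n π (i + 1) < oneLine n π i).card

def pval (n : ℕ) (π : Equiv.Perm (Fin n)) : ℕ :=
  ((Finset.Icc 2 (n - 1)).filter fun i =>
    oneLine n π i < oneLine n π (i - 1) ∧ oneLine n π i < oneLine n π (i + 1)).card

def udr (n : ℕ) (π : Equiv.Perm (Fin n)) : ℕ := lpk n π + pval n π + 1

def fullCycleType (n : ℕ) (π : Equiv.Perm (Fin n)) : Multiset ℕ :=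
  π.cycleType + Multiset.replicate (n - π.support.card) 1

def numCycles (n : ℕ) (π : Equiv.Perm (Fin n)) : ℕ := Multiset.card (fullCycleType n π)

def numOddCycles (n : ℕ) (π : Equiv.Perm (Fin n)) : ℕ :=
  Multiset.card ((fullCycleType n π).filter fun p => p % 2 = 1)

def IsCyclicPerm (n : ℕ) (π : Equiv.Perm (Fin n)) : Prop :=
  fullCycleType n π = {n}

def cyclicSet (n : ℕ) : Finset (Equiv.Perm (Fin n)) :=
  Finset.univ.filter fun π => IsCyclicPerm n π

def invSet (n : ℕ) : Finset (Equiv.Perm (Fin n)) :=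
  Finset.univ.filter fun π => π ^ 2 = 1

def eulerianA (m : ℕ) : Polynomial ℚ :=
  ∑ π : Equiv.Perm (Fin m), Polynomial.X ^ (des m π + 1)

def peakP (m : ℕ) : Polynomial ℚ :=
  ∑ π : Equiv.Perm (Fin m), Polynomial.X ^ (pk m π + 1)

def leftPeakP (m : ℕ) : Polynomial ℚ :=
  ∑ π : Equiv.Perm (Fin m), Polynomial.X ^ (lpk m π)

def cnk (n k : ℕ) : ℕ :=
  (Finset.univ.filter fun π : Equiv.Perm (Fin n) =>
    (∀ p ∈ fullCycleType n π, ¬ (4 ∣ p)) ∧ numCycles n (π ^ 2) = k).card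

def bnk (n k : ℕ) : ℕ :=
  (Finset.univ.filter fun π : Equiv.Perm (Fin n) => numCycles n (π ^ 2) = k).card

def dnk (n k : ℕ) : ℕ :=
  (Finset.univ.filter fun π : Equiv.Perm (Fin n) => numOddCycles n (π ^ 2) = k).card

/-- `N g m` is the coefficient of `u^m` in `(1+u)^g (1-u)^{-g}`. -/
def Ncoef (g m : ℕ) : ℚ :=
  PowerSeries.coeff (R := ℚ) m
    ((1 + PowerSeries.X) ^ g * ((1 - PowerSeries.X : PowerSeries ℚ)⁻¹) ^ g)

/-! Stembridge's enriched `P`-partitions turn peaks into a count: reading the descents of `π` from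
left to right shows that `(1 - t) ^ (n + 1)` times the generating function, over `k`, of the maps
`f` from `[n]` to `2k` letters of alternating signs that are signed-monotone for `π` is the peak
monomial of `π`. It remains to count, for each `k`, the pairs `(π, f)` in which `π` has the
prescribed cycle type.

Replace `f` by its itineraries `W x = (f (π ^ j x))_j`. In the lexicographic order twisted by the
signs of prefixes, `W` is a signed-monotone semiconjugacy from `π` to the shift of periodic words,
and `(π, W)` is determined by the sizes of the fibres of `W`, which may be any function `M` with sum
`n` that is constant on shift orbits. The first return to a fibre over an orbit of length `ℓ` is
monotone on the fibre, increasing or decreasing with the sign of the orbit. If increasing, it is the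
identity and gives `M` cycles of length `ℓ`; if decreasing, it is a reversal and gives `M % 2`
cycles of length `ℓ` and `M / 2` of length `2ℓ`. So the cycles of length `i` have generating
function `(1 + u) ^ a * (1 - u) ^ (-b)`, where `a` counts the negative orbits of length `i`, and `b`
the positive ones of length `i` and the negative ones of length `i / 2`.

The signs of the letters add up to zero, so the sum of the signs of the words of period `j` vanishes
for every `j > 0`. Möbius inversion of this fact, and of the number `(2k) ^ j` of these words, gives
`a = b = g i k`. -/

section

open PowerSeries

/-! ### Peaks and enriched chains -/

/-- The weakly increasing sequences `f 0 ≤ ⋯ ≤ f m` in `Fin K` in which `f i = f (i + 1)` is allowed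
only if the parity of this common value matches `D i`: these are Stembridge's enriched
`P`-partitions of a chain with descent set `D`, with the even letters as the negative ones. -/
def enrichedChains (D : ℕ → Prop) (m K : ℕ) : Finset (Fin (m + 1) → Fin K) :=
  {f | ∀ i : Fin m, f i.castSucc < f i.succ ∨
    f i.castSucc = f i.succ ∧ (D i ↔ Even (f i.succ).val)}

theorem mem_enrichedChains {D : ℕ → Prop} {m K : ℕ} {f : Fin (m + 1) → Fin K} :
    f ∈ enrichedChains D m K ↔ ∀ i : Fin m, f i.castSucc < f i.succ ∨
      f i.castSucc = f i.succ ∧ (D i ↔ Even (f i.succ).val) := by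
  simp [enrichedChains]

theorem monotone_of_mem_enrichedChains {D : ℕ → Prop} {m K : ℕ} {f : Fin (m + 1) → Fin K}
    (hf : f ∈ enrichedChains D m K) : Monotone f :=
  Fin.monotone_iff_le_succ.2 fun i =>
    (mem_enrichedChains.1 hf i).elim le_of_lt fun h => h.1.le

theorem card_enrichedChains_zero_left (D : ℕ → Prop) (K : ℕ) :
    (enrichedChains D 0 K).card = K := by
  simp [enrichedChains]

theorem card_enrichedChains_zero_right (D : ℕ → Prop) (m : ℕ) :
    (enrichedChains D m 0).card = 0 := by
  simp [Finset.eq_empty_of_isEmpty]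

theorem card_enrichedChains_last_ne (D : ℕ → Prop) (m c : ℕ) :
    {f ∈ enrichedChains D m (c + 1) | f (Fin.last m) ≠ Fin.last c}.card =
      (enrichedChains D m c).card := by
  symm
  refine Finset.card_bij (fun f _ i => (f i).castSucc) (fun f hf => ?_) (fun f _ f' _ h => ?_)
    fun f hf => ?_
  · simpa [mem_enrichedChains] using hf
  · exact funext fun i => Fin.castSucc_injective c (congrFun h i)
  · obtain ⟨hf, hlast⟩ := Finset.mem_filter.1 hf
    have hne (i) : f i ≠ Fin.last c := fun hi =>
      hlast (Fin.last_le_iff.1 (hi ▸ monotone_of_mem_enrichedChains hf (Fin.le_last i)))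
    choose f' hf' using fun i => Fin.exists_castSucc_eq.2 (hne i)
    obtain rfl : (fun i => (f' i).castSucc) = f := funext hf'
    exact ⟨f', by simpa [mem_enrichedChains] using hf, rfl⟩

theorem snoc_mem_enrichedChains {D : ℕ → Prop} {m K : ℕ} {f : Fin (m + 1) → Fin K} {a : Fin K} :
    (Fin.snoc f a : Fin (m + 2) → Fin K) ∈ enrichedChains D (m + 1) K ↔
      f ∈ enrichedChains D m K ∧
        (f (Fin.last m) < a ∨ f (Fin.last m) = a ∧ (D m ↔ Even a.val)) := by
  simp [mem_enrichedChains, Fin.forall_fin_succ', ← Fin.castSucc_succ]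

theorem card_enrichedChains_last_eq (D : ℕ → Prop) (m c : ℕ) :
    {f ∈ enrichedChains D (m + 1) (c + 1) | f (Fin.last (m + 1)) = Fin.last c}.card =
      {f ∈ enrichedChains D m (c + 1) | f (Fin.last m) ≠ Fin.last c ∨ (D m ↔ Even c)}.card := by
  have hmem (f : Fin (m + 1) → Fin (c + 1)) :
      (Fin.snoc f (Fin.last c) : Fin (m + 2) → Fin (c + 1)) ∈ enrichedChains D (m + 1) (c + 1) ↔
        f ∈ enrichedChains D m (c + 1) ∧ (f (Fin.last m) ≠ Fin.last c ∨ (D m ↔ Even c)) := by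
    rw [snoc_mem_enrichedChains, Fin.lt_last_iff_ne_last, Fin.val_last]
    tauto
  symm
  refine Finset.card_bij (fun f _ => Fin.snoc f (Fin.last c)) (fun f hf => ?_)
    (fun f _ f' _ h => (Fin.snoc_inj.1 h).1) fun f hf => ?_
  · exact Finset.mem_filter.2 ⟨(hmem f).2 (Finset.mem_filter.1 hf), Fin.snoc_last _ _⟩
  · obtain ⟨hf, hlast⟩ := Finset.mem_filter.1 hf
    rw [← Fin.snoc_init_self f, hlast] at hf ⊢
    exact ⟨Fin.init f, Finset.mem_filter.2 ((hmem _).1 hf), rfl⟩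

theorem card_enrichedChains_succ (D : ℕ → Prop) (m c : ℕ) :
    (enrichedChains D (m + 1) (c + 1)).card = (enrichedChains D (m + 1) c).card +
      {f ∈ enrichedChains D m (c + 1) | f (Fin.last m) ≠ Fin.last c ∨ (D m ↔ Even c)}.card := by
  rw [← card_enrichedChains_last_eq, ← card_enrichedChains_last_ne D (m + 1) c,
    add_comm (Finset.card _), Finset.card_filter_add_card_filter_not]

theorem card_enrichedChains_succ_of_iff {D : ℕ → Prop} {m c : ℕ} (h : D m ↔ Even c) :
    (enrichedChains D (m + 1) (c + 1)).card =
      (enrichedChains D (m + 1) c).card + (enrichedChains D m (c + 1)).card := by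
  simp only [card_enrichedChains_succ, h, or_true, Finset.filter_true]

theorem card_enrichedChains_succ_of_not_iff {D : ℕ → Prop} {m c : ℕ} (h : ¬ (D m ↔ Even c)) :
    (enrichedChains D (m + 1) (c + 1)).card =
      (enrichedChains D (m + 1) c).card + (enrichedChains D m c).card := by
  simp only [card_enrichedChains_succ, h, or_false, card_enrichedChains_last_ne]

/-- The generating function of the numbers of enriched chains in an alphabet of even size. -/
def evenChainSeries (D : ℕ → Prop) (m : ℕ) : PowerSeries ℚ :=
  mk fun k => ((enrichedChains D m (2 * k)).card : ℚ)

/-- The generating function of the numbers of enriched chains in an alphabet of odd size. -/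
def oddChainSeries (D : ℕ → Prop) (m : ℕ) : PowerSeries ℚ :=
  mk fun k => ((enrichedChains D m (2 * k + 1)).card : ℚ)

theorem evenChainSeries_succ_of_not {D : ℕ → Prop} {m : ℕ} (h : ¬ D m) :
    evenChainSeries D (m + 1) = X * oddChainSeries D (m + 1) + evenChainSeries D m := by
  ext (_ | k)
  · simp [evenChainSeries, card_enrichedChains_zero_right]
  · simp only [evenChainSeries, oddChainSeries, map_add, coeff_succ_X_mul, coeff_mk]
    exact_mod_cast card_enrichedChains_succ_of_iff (c := 2 * k + 1) (by simp [h])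

theorem evenChainSeries_succ_of {D : ℕ → Prop} {m : ℕ} (h : D m) :
    evenChainSeries D (m + 1) = X * (oddChainSeries D (m + 1) + oddChainSeries D m) := by
  ext (_ | k)
  · simp [evenChainSeries, card_enrichedChains_zero_right]
  · simp only [evenChainSeries, oddChainSeries, map_add, coeff_succ_X_mul, coeff_mk]
    exact_mod_cast card_enrichedChains_succ_of_not_iff (c := 2 * k + 1) (by simp [h])

theorem oddChainSeries_succ_of_not {D : ℕ → Prop} {m : ℕ} (h : ¬ D m) :
    oddChainSeries D (m + 1) = evenChainSeries D (m + 1) + evenChainSeries D m := by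
  ext k
  simp only [evenChainSeries, oddChainSeries, map_add, coeff_mk]
  exact_mod_cast card_enrichedChains_succ_of_not_iff (c := 2 * k) (by simp [h])

theorem oddChainSeries_succ_of {D : ℕ → Prop} {m : ℕ} (h : D m) :
    oddChainSeries D (m + 1) = evenChainSeries D (m + 1) + oddChainSeries D m := by
  ext k
  simp only [evenChainSeries, oddChainSeries, map_add, coeff_mk]
  exact_mod_cast card_enrichedChains_succ_of_iff (c := 2 * k) (by simp [h])

theorem oddChainSeries_zero (D : ℕ → Prop) :
    oddChainSeries D 0 = evenChainSeries D 0 + mk 1 := by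
  ext k
  simp [evenChainSeries, oddChainSeries, card_enrichedChains_zero_left]

theorem evenChainSeries_zero (D : ℕ → Prop) :
    evenChainSeries D 0 = X * (oddChainSeries D 0 + mk 1) := by
  ext (_ | k)
  · simp [evenChainSeries, card_enrichedChains_zero_left]
  · simp only [evenChainSeries, oddChainSeries, coeff_succ_X_mul, map_add, coeff_mk,
      card_enrichedChains_zero_left, Pi.one_apply]
    push_cast
    ring

theorem one_sub_X_sq_mul_evenChainSeries_zero (D : ℕ → Prop) :
    (1 - X) ^ 2 * evenChainSeries D 0 = 2 * X := by
  linear_combination (1 - X) * evenChainSeries_zero D + X * (1 - X) * oddChainSeries_zero D +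
    2 * X * mk_one_mul_one_sub_eq_one ℚ

theorem one_sub_X_sq_mul_oddChainSeries_zero (D : ℕ → Prop) :
    (1 - X) ^ 2 * oddChainSeries D 0 = 1 + X := by
  linear_combination (1 - X) * evenChainSeries_zero D + (1 - X) * oddChainSeries_zero D +
    (1 + X) * mk_one_mul_one_sub_eq_one ℚ

theorem evenChainSeries_ascent {D : ℕ → Prop} {m : ℕ} (h : ¬ D m) :
    (1 - X) * evenChainSeries D (m + 1) = (1 + X) * evenChainSeries D m := by
  linear_combination evenChainSeries_succ_of_not h + X * oddChainSeries_succ_of_not h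

theorem evenChainSeries_descent {D : ℕ → Prop} {m : ℕ} (h : D m) :
    (1 - X) * evenChainSeries D (m + 1) = 2 * X * oddChainSeries D m := by
  linear_combination evenChainSeries_succ_of h + X * oddChainSeries_succ_of h

theorem evenChainSeries_double_descent {D : ℕ → Prop} {m : ℕ} (h : D m) (h' : D (m + 1)) :
    (1 - X) * evenChainSeries D (m + 2) = (1 + X) * evenChainSeries D (m + 1) := by
  linear_combination evenChainSeries_descent h' + X * oddChainSeries_succ_of h -
    evenChainSeries_succ_of h

theorem evenChainSeries_peak {D : ℕ → Prop} {m : ℕ} (h : ¬ D m) (h' : D (m + 1)) :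
    (1 - X) ^ 2 * evenChainSeries D (m + 2) = 4 * X * evenChainSeries D m := by
  linear_combination (1 - X) * evenChainSeries_descent h' +
    2 * X * (1 - X) * oddChainSeries_succ_of_not h + 2 * X * evenChainSeries_ascent h

/-- The number of peaks `¬ D i ∧ D (i + 1)` of a chain with `m + 1` elements and descent set `D`. -/
def chainPeaks (D : ℕ → Prop) (m : ℕ) : ℕ :=
  Nat.count (fun i => ¬ D i ∧ D (i + 1)) (m - 1)

theorem chainPeaks_of_peak {D : ℕ → Prop} {m : ℕ} (h : ¬ D m) (h' : D (m + 1)) :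
    chainPeaks D (m + 2) = chainPeaks D m + 1 := by
  cases m <;> simp [chainPeaks, Nat.count_succ, h, h']

theorem chainPeaks_of_not_peak {D : ℕ → Prop} {m : ℕ} (h : D (m + 1) → D m) :
    chainPeaks D (m + 2) = chainPeaks D (m + 1) := by
  have : ¬ (¬ D m ∧ D (m + 1)) := by tauto
  simp [chainPeaks, Nat.count_succ, this]

theorem two_mul_chainPeaks_le (D : ℕ → Prop) (m : ℕ) : 2 * chainPeaks D m ≤ m := by
  induction m using Nat.twoStepInduction with
  | zero => simp [chainPeaks]
  | one => simp [chainPeaks]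
  | more m ih ih' =>
    by_cases h : D (m + 1) → D m
    · rw [chainPeaks_of_not_peak h]
      omega
    · obtain ⟨h', h⟩ := Classical.not_imp.1 h
      rw [chainPeaks_of_peak h h']
      omega

theorem one_sub_X_pow_mul_evenChainSeries (D : ℕ → Prop) (m : ℕ) :
    (1 - X) ^ (m + 2) * evenChainSeries D m =
      2 * X * (4 * X) ^ chainPeaks D m * (1 + X) ^ (m - 2 * chainPeaks D m) := by
  induction m using Nat.twoStepInduction with
  | zero => simp [chainPeaks, one_sub_X_sq_mul_evenChainSeries_zero]
  | one =>
    have hstep : (1 - X) * evenChainSeries D 1 = (1 + X) * evenChainSeries D 0 ∨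
        (1 - X) * evenChainSeries D 1 = 2 * X * oddChainSeries D 0 := by
      by_cases h : D 0
      exacts [.inr (evenChainSeries_descent h), .inl (evenChainSeries_ascent h)]
    simp only [chainPeaks, Nat.sub_self, Nat.count_zero]
    rcases hstep with h | h
    · linear_combination (1 - X) ^ 2 * h + (1 + X) * one_sub_X_sq_mul_evenChainSeries_zero D
    · linear_combination (1 - X) ^ 2 * h + 2 * X * one_sub_X_sq_mul_oddChainSeries_zero D
  | more m ih ih' =>
    by_cases h : D (m + 1) → D m
    · have hstep : (1 - X) * evenChainSeries D (m + 2) = (1 + X) * evenChainSeries D (m + 1) := by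
        by_cases h' : D (m + 1)
        exacts [evenChainSeries_double_descent (h h') h', evenChainSeries_ascent h']
      have hle := two_mul_chainPeaks_le D (m + 1)
      rw [chainPeaks_of_not_peak h, show m + 2 = m + 1 + 1 from rfl, Nat.sub_add_comm hle,
        pow_succ (1 + X)]
      linear_combination (1 - X) ^ (m + 3) * hstep + (1 + X) * ih'
    · obtain ⟨h', h⟩ := Classical.not_imp.1 h
      rw [chainPeaks_of_peak h h', mul_add_one, Nat.add_sub_add_right]
      linear_combination (1 - X) ^ (m + 2) * evenChainSeries_peak h h' + 4 * X * ih

/-! ### Signed monotone pairs -/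

/-- `f` is weakly increasing, and within each fibre of `f` the map `π` is strictly increasing or
strictly decreasing according to the sign `ε a` of the common value `a`. For a permutation `π` this
makes `f` an enriched `P`-partition of the chain labelled by `π`. -/
structure SignedMonotone {α A : Type*} [Preorder α] [Preorder A] (ε : A → ℤˣ) (π : α → α)
    (f : α → A) : Prop where
  monotone : Monotone f
  strictMonoOn : ∀ a, ε a = 1 → StrictMonoOn π (f ⁻¹' {a})
  strictAntiOn : ∀ a, ε a = -1 → StrictAntiOn π (f ⁻¹' {a})

theorem signedMonotone_iff {α A : Type*} [PartialOrder α] [PartialOrder A] {ε : A → ℤˣ}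
    {π : α → α} {f : α → A} :
    SignedMonotone ε π f ↔ ∀ ⦃x y⦄, x < y → f x < f y ∨
      f x = f y ∧ (ε (f x) = 1 → π x < π y) ∧ (ε (f x) = -1 → π y < π x) := by
  refine ⟨fun h x y hxy => ?_, fun h => ⟨?_, fun a ha x hx y hy hxy => ?_,
    fun a ha x hx y hy hxy => ?_⟩⟩
  · refine (h.monotone hxy.le).lt_or_eq.imp_right fun hf => ⟨hf, fun hε => ?_, fun hε => ?_⟩
    · exact h.strictMonoOn _ hε rfl hf.symm hxy
    · exact h.strictAntiOn _ hε rfl hf.symm hxy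
  · exact monotone_iff_forall_lt.2 fun x y hxy => (h hxy).elim le_of_lt fun h => h.1.le
  · obtain rfl : f x = a := hx
    exact ((h hxy).resolve_left (Eq.symm hy).not_lt).2.1 ha
  · obtain rfl : f x = a := hx
    exact ((h hxy).resolve_left (Eq.symm hy).not_lt).2.2 ha

/-- `π` has a descent at the `j`-th position, counting positions from `0`. -/
def HasDescent {n : ℕ} (π : Equiv.Perm (Fin n)) (j : ℕ) : Prop :=
  oneLine n π (j + 2) < oneLine n π (j + 1)

theorem oneLine_castSucc {m : ℕ} (π : Equiv.Perm (Fin (m + 1))) (i : Fin m) :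
    oneLine (m + 1) π (i + 1) = π i.castSucc + 1 :=
  dif_pos ⟨by omega, by omega⟩

theorem oneLine_succ {m : ℕ} (π : Equiv.Perm (Fin (m + 1))) (i : Fin m) :
    oneLine (m + 1) π (i + 2) = π i.succ + 1 :=
  dif_pos ⟨by omega, by omega⟩

theorem hasDescent_iff {m : ℕ} (π : Equiv.Perm (Fin (m + 1))) (i : Fin m) :
    HasDescent π i ↔ π i.succ < π i.castSucc := by
  rw [HasDescent, oneLine_succ, oneLine_castSucc, add_lt_add_iff_right, Fin.lt_def]

theorem not_hasDescent_iff {m : ℕ} (π : Equiv.Perm (Fin (m + 1))) (i : Fin m) :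
    ¬ HasDescent π i ↔ π i.castSucc < π i.succ := by
  rw [hasDescent_iff, not_lt, (π.injective.ne Fin.castSucc_lt_succ.ne).le_iff_lt]

theorem pk_succ (m : ℕ) (π : Equiv.Perm (Fin (m + 1))) :
    pk (m + 1) π = chainPeaks (HasDescent π) m := by
  have hIcc : Finset.Icc 2 m = (Finset.range (m - 1)).map (addRightEmbedding 2) := by
    rw [Finset.range_eq_Ico, Finset.map_add_right_Ico]
    ext i
    simp only [Finset.mem_Icc, Finset.mem_Ico]
    omega
  have hascent (j : ℕ) (hj : j < m) :
      oneLine (m + 1) π (j + 1) < oneLine (m + 1) π (j + 2) ↔ ¬ HasDescent π j := by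
    rw [not_hasDescent_iff π ⟨j, hj⟩, oneLine_castSucc π ⟨j, hj⟩, oneLine_succ π ⟨j, hj⟩,
      add_lt_add_iff_right, Fin.lt_def]
  rw [pk, chainPeaks, Nat.count_eq_card_filter_range, Nat.add_sub_cancel, hIcc, Finset.filter_map,
    Finset.card_map]
  congr 1
  refine Finset.filter_congr fun j hj => and_congr_left' (hascent j ?_)
  have := Finset.mem_range.1 hj
  omega

/-- The sign of a letter of `Fin K`: the even letters are negative. -/
def paritySign {K : ℕ} (c : Fin K) : ℤˣ := (-1) ^ (c.val + 1)

theorem paritySign_eq_one_iff {K : ℕ} (c : Fin K) : paritySign c = 1 ↔ ¬ Even c.val := by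
  rw [paritySign, neg_one_pow_eq_one_iff_even (by decide), Nat.even_add_one]

theorem paritySign_eq_neg_one_iff {K : ℕ} (c : Fin K) : paritySign c = -1 ↔ Even c.val := by
  rw [paritySign, neg_one_pow_eq_neg_one_iff_odd (by decide), Nat.odd_add_one, Nat.not_odd_iff_even]

theorem signedMonotone_fin_succ_iff {A : Type*} [PartialOrder A] {m : ℕ} {ε : A → ℤˣ}
    {π : Fin (m + 1) → Fin (m + 1)} {f : Fin (m + 1) → A} :
    SignedMonotone ε π f ↔ ∀ i : Fin m, f i.castSucc < f i.succ ∨ f i.castSucc = f i.succ ∧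
      (ε (f i.castSucc) = 1 → π i.castSucc < π i.succ) ∧
      (ε (f i.castSucc) = -1 → π i.succ < π i.castSucc) := by
  let r (x y : Fin (m + 1)) : Prop :=
    f x < f y ∨ f x = f y ∧ (ε (f x) = 1 → π x < π y) ∧ (ε (f x) = -1 → π y < π x)
  have : IsTrans (Fin (m + 1)) r := ⟨by
    rintro x y z (hxy | ⟨hxy, hpos, hneg⟩) (hyz | ⟨hyz, hpos', hneg'⟩)
    · exact .inl (hxy.trans hyz)
    · exact .inl (hyz ▸ hxy)
    · exact .inl (hxy ▸ hyz)
    · exact .inr ⟨hxy.trans hyz, fun h => (hpos h).trans (hpos' (hxy ▸ h)),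
        fun h => (hneg' (hxy ▸ h)).trans (hneg h)⟩⟩
  exact signedMonotone_iff.trans (Fin.liftFun_iff_succ r (f := id))

theorem signedMonotone_paritySign_iff {m K : ℕ} (π : Equiv.Perm (Fin (m + 1)))
    (f : Fin (m + 1) → Fin K) :
    SignedMonotone paritySign π f ↔ f ∈ enrichedChains (HasDescent π) m K := by
  rw [signedMonotone_fin_succ_iff, mem_enrichedChains]
  refine forall_congr' fun i => or_congr_right (and_congr_right fun hi => ?_)
  rw [← hi, paritySign_eq_one_iff, paritySign_eq_neg_one_iff, ← hasDescent_iff,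
    ← not_hasDescent_iff]
  tauto

theorem half_peak_monomial_eq {m : ℕ} (π : Equiv.Perm (Fin (m + 1))) :
    C (1 / 2 : ℚ) * (4 ^ (pk (m + 1) π + 1) * X ^ (pk (m + 1) π + 1) *
        (1 + X) ^ (m - 2 * pk (m + 1) π)) =
      (1 - X) ^ (m + 2) * mk fun k =>
        (Nat.card {f : Fin (m + 1) → Fin (2 * k) // SignedMonotone paritySign π f} : ℚ) := by
  have hseries : mk (fun k => (Nat.card {f : Fin (m + 1) → Fin (2 * k) //
      SignedMonotone paritySign π f} : ℚ)) = evenChainSeries (HasDescent π) m := by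
    simp only [signedMonotone_paritySign_iff, evenChainSeries, Nat.card_eq_fintype_card,
      Fintype.card_coe]
  have hhalf : C (1 / 2 : ℚ) * 4 = 2 := by
    rw [← map_ofNat C 4, ← map_mul, ← map_ofNat C 2]
    norm_num
  rw [hseries, one_sub_X_pow_mul_evenChainSeries, pk_succ, mul_pow]
  linear_combination X * 4 ^ chainPeaks (HasDescent π) m * X ^ chainPeaks (HasDescent π) m *
    (1 + X) ^ (m - 2 * chainPeaks (HasDescent π) m) * hhalf

/-! ### Factorization through signed dynamical systems -/

/-- The multiplicative cocycle `s w * s (σ w) * ⋯ * s (σ^[j - 1] w)` of a weight `s`. -/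
def orbitProd {Q M : Type*} [CommMonoid M] (s : Q → M) (σ : Q → Q) (j : ℕ) (w : Q) : M :=
  ∏ i ∈ Finset.range j, s (σ^[i] w)

theorem orbitProd_zero {Q M : Type*} [CommMonoid M] (s : Q → M) (σ : Q → Q) (w : Q) :
    orbitProd s σ 0 w = 1 :=
  Finset.prod_range_zero _

theorem orbitProd_succ {Q M : Type*} [CommMonoid M] (s : Q → M) (σ : Q → Q) (j : ℕ) (w : Q) :
    orbitProd s σ (j + 1) w = orbitProd s σ j w * s (σ^[j] w) :=
  Finset.prod_range_succ _ _

theorem orbitProd_congr {Q Q' M : Type*} [CommMonoid M] {s : Q → M} {s' : Q' → M} {σ : Q → Q}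
    {σ' : Q' → Q'} {j : ℕ} {w : Q} {w' : Q'} (h : ∀ i < j, s (σ^[i] w) = s' (σ'^[i] w')) :
    orbitProd s σ j w = orbitProd s' σ' j w' :=
  Finset.prod_congr rfl fun i hi => h i (Finset.mem_range.1 hi)

theorem SignedMonotone.iterate_lt_iterate {α A : Type*} [PartialOrder α] [PartialOrder A]
    {ε : A → ℤˣ} {π : α → α} {f : α → A} (h : SignedMonotone ε π f) {x y : α} (hxy : x < y)
    {j : ℕ} (hagree : ∀ i < j, f (π^[i] x) = f (π^[i] y)) :
    (orbitProd (ε ∘ f) π j x = 1 → π^[j] x < π^[j] y) ∧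
      (orbitProd (ε ∘ f) π j x = -1 → π^[j] y < π^[j] x) := by
  induction j with
  | zero => exact ⟨fun _ => hxy, fun h => absurd h (by rw [orbitProd_zero]; decide)⟩
  | succ j ih =>
    obtain ⟨ihpos, ihneg⟩ := ih fun i hi => hagree i (hi.trans j.lt_succ_self)
    have hj := hagree j j.lt_succ_self
    rw [orbitProd_succ, Function.iterate_succ_apply', Function.iterate_succ_apply',
      Function.comp_apply]
    rcases Int.units_eq_one_or (orbitProd (ε ∘ f) π j x) with hprod | hprod <;>
      rcases Int.units_eq_one_or (ε (f (π^[j] x))) with hε | hε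
    · simpa [hprod, hε] using h.strictMonoOn _ hε rfl hj.symm (ihpos hprod)
    · simpa [hprod, hε] using h.strictAntiOn _ hε rfl hj.symm (ihpos hprod)
    · simpa [hprod, hε] using h.strictMonoOn _ hε hj.symm rfl (ihneg hprod)
    · simpa [hprod, hε] using h.strictAntiOn _ hε hj.symm rfl (ihneg hprod)

/-- A signed monotone system in which a point is determined by the letters along its forward
orbit, such as the shift on a suitably ordered space of words. -/
structure SeparatedSystem {Q A : Type*} [Preorder Q] [Preorder A] (ε : A → ℤˣ) (σ : Q → Q)
    (a : Q → A) : Prop extends SignedMonotone ε σ a where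
  separated : ∀ v w, (∀ j, a (σ^[j] v) = a (σ^[j] w)) → v = w

namespace SeparatedSystem

variable {α Q A : Type*} [LinearOrder α] [LinearOrder Q] [PartialOrder A] {ε : A → ℤˣ}
  {σ : Q → Q} {a : Q → A} {π : α → α} {W : α → Q}

theorem monotone_of_signedMonotone_comp (hσ : SeparatedSystem ε σ a)
    (hW : Function.Semiconj W π σ) (h : SignedMonotone ε π (a ∘ W)) : Monotone W := by
  refine monotone_iff_forall_lt.2 fun x y hxy => not_lt.1 fun hlt => ?_
  have hletter (j : ℕ) (z : α) : (a ∘ W) (π^[j] z) = a (σ^[j] (W z)) :=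
    congrArg a ((hW.iterate_right j).eq z)
  obtain ⟨j, hj, hmin⟩ : ∃ j, a (σ^[j] (W x)) ≠ a (σ^[j] (W y)) ∧
      ∀ i < j, a (σ^[i] (W x)) = a (σ^[i] (W y)) := by
    have hex : ∃ j, a (σ^[j] (W x)) ≠ a (σ^[j] (W y)) :=
      not_forall.1 fun hall => hlt.ne' (hσ.separated _ _ hall)
    exact ⟨Nat.find hex, Nat.find_spec hex, fun i hi => not_not.1 (Nat.find_min hex hi)⟩
  have hprod : orbitProd (ε ∘ a ∘ W) π j x = orbitProd (ε ∘ a) σ j (W y) :=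
    orbitProd_congr fun i hi => congrArg ε ((hletter i x).trans (hmin i hi))
  obtain ⟨hpos, hneg⟩ := h.iterate_lt_iterate hxy (j := j) fun i hi => by
    rw [hletter, hletter, hmin i hi]
  obtain ⟨hpos', hneg'⟩ := hσ.iterate_lt_iterate hlt fun i hi => (hmin i hi).symm
  rcases Int.units_eq_one_or (orbitProd (ε ∘ a) σ j (W y)) with h1 | h1
  · refine hj (le_antisymm ?_ (hσ.monotone (hpos' h1).le))
    rw [← hletter, ← hletter]
    exact h.monotone (hpos (hprod.trans h1)).le
  · refine hj (le_antisymm (hσ.monotone (hneg' h1).le) ?_)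
    rw [← hletter, ← hletter]
    exact h.monotone (hneg (hprod.trans h1)).le

theorem signedMonotone_comp_iff (hσ : SeparatedSystem ε σ a) (hW : Function.Semiconj W π σ) :
    SignedMonotone ε π (a ∘ W) ↔ SignedMonotone (ε ∘ a) π W := by
  constructor
  · intro h
    have hfibre (w : Q) : W ⁻¹' {w} ⊆ (a ∘ W) ⁻¹' {a w} := fun x hx => congrArg a hx
    exact ⟨hσ.monotone_of_signedMonotone_comp hW h,
      fun w hw => (h.strictMonoOn _ hw).mono (hfibre w),
      fun w hw => (h.strictAntiOn _ hw).mono (hfibre w)⟩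
  · intro h
    have hlt {x y} (hxy : W (π x) < W (π y)) : π x < π y := h.monotone.reflect_lt hxy
    refine ⟨hσ.monotone.comp h.monotone, fun b hb x hx y hy hxy => ?_,
      fun b hb x hx y hy hxy => ?_⟩
    · rcases (h.monotone hxy.le).lt_or_eq with hW' | hW'
      · apply hlt
        rw [hW, hW]
        exact hσ.strictMonoOn b hb hx hy hW'
      · exact h.strictMonoOn (W x) (by rwa [Function.comp_apply, show a (W x) = b from hx]) rfl
          hW'.symm hxy
    · rcases (h.monotone hxy.le).lt_or_eq with hW' | hW'
      · apply hlt
        rw [hW, hW]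
        exact hσ.strictAntiOn b hb hx hy hW'
      · exact h.strictAntiOn (W x) (by rwa [Function.comp_apply, show a (W x) = b from hx]) rfl
          hW'.symm hxy

end SeparatedSystem

theorem eq_id_of_strictMono {α : Type*} [LinearOrder α] [Finite α] {f : α → α}
    (hf : StrictMono f) : f = id :=
  funext fun _ => le_antisymm hf.apply_le hf.le_apply

theorem exists_equiv_strictMono_or_strictAnti {α β : Type*} [LinearOrder α] [LinearOrder β]
    [Finite α] [Finite β] (h : Nat.card α = Nat.card β) (s : ℤˣ) :
    ∃ e : α ≃ β, (s = 1 → StrictMono e) ∧ (s = -1 → StrictAnti e) := by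
  have := Fintype.ofFinite α
  have := Fintype.ofFinite β
  let eα := monoEquivOfFin α (Nat.card_eq_fintype_card (α := α)).symm
  let eβ := monoEquivOfFin β (h.trans Nat.card_eq_fintype_card).symm
  rcases Int.units_eq_one_or s with rfl | rfl
  · exact ⟨(eα.symm.trans eβ).toEquiv, fun _ => (eα.symm.trans eβ).strictMono,
      fun h => absurd h (by decide)⟩
  · exact ⟨eα.symm.toEquiv.trans (Fin.revPerm.trans eβ.toEquiv), fun h => absurd h (by decide),
      fun _ x y hxy => eβ.strictMono (Fin.rev_strictAnti (eα.symm.strictMono hxy))⟩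

theorem exists_perm_signedMonotone {α Q : Type*} [LinearOrder α] [Finite α] [Preorder Q]
    (s : Q → ℤˣ) (σ : Equiv.Perm Q) {W : α → Q} (hW : Monotone W)
    (hcard : ∀ w, Nat.card {x // W x = w} = Nat.card {x // W x = σ w}) :
    ∃ π : Equiv.Perm α, Function.Semiconj W π σ ∧ SignedMonotone s π W := by
  choose e hpos hneg using fun w => exists_equiv_strictMono_or_strictAnti (hcard w) (s w)
  let π : Equiv.Perm α :=
    (Equiv.sigmaFiberEquiv W).symm.trans ((σ.sigmaCongr e).trans (Equiv.sigmaFiberEquiv W))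
  have hπ {x : α} {w : Q} (hx : W x = w) : π x = e w ⟨x, hx⟩ := by
    subst hx
    rfl
  refine ⟨π, fun x => ?_, hW, fun w hw x hx y hy hxy => ?_, fun w hw x hx y hy hxy => ?_⟩
  · rw [hπ rfl, (e (W x) ⟨x, rfl⟩).2]
  · rw [hπ hx, hπ hy]
    exact hpos w hw (a := ⟨x, hx⟩) (b := ⟨y, hy⟩) hxy
  · rw [hπ hx, hπ hy]
    exact hneg w hw (a := ⟨x, hx⟩) (b := ⟨y, hy⟩) hxy

theorem SignedMonotone.perm_unique {α Q : Type*} [LinearOrder α] [Finite α] [PartialOrder Q]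
    {s : Q → ℤˣ} {σ : Q → Q} {W : α → Q} {π π' : Equiv.Perm α}
    (hsemi : Function.Semiconj W π σ) (hsemi' : Function.Semiconj W π' σ)
    (h : SignedMonotone s π W) (h' : SignedMonotone s π' W) (hσ : Function.Injective σ) :
    π = π' := by
  have hW (x : α) : W (π'.symm (π x)) = W x := by
    apply hσ
    rw [← hsemi', Equiv.apply_symm_apply, hsemi]
  have hmono : StrictMono (π.trans π'.symm) := by
    intro x y hxy
    rcases (h.monotone hxy.le).lt_or_eq with hlt | heq
    · refine h.monotone.reflect_lt ?_
      simpa only [Equiv.trans_apply, hW] using hlt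
    · rcases Int.units_eq_one_or (s (W x)) with hs | hs
      · refine (h'.strictMonoOn _ hs).lt_iff_lt (hW x) ((hW y).trans heq.symm) |>.1 ?_
        simpa using h.strictMonoOn _ hs rfl heq.symm hxy
      · refine (h'.strictAntiOn _ hs).lt_iff_gt ((hW y).trans heq.symm) (hW x) |>.1 ?_
        simpa using h.strictAntiOn _ hs rfl heq.symm hxy
  ext x
  simpa using congrArg π' (congrFun (eq_id_of_strictMono hmono) x)

theorem exists_monotone_card_fiber_eq {Q : Type*} [LinearOrder Q] [Fintype Q] {n : ℕ} {M : Q → ℕ}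
    (hM : ∑ w, M w = n) :
    ∃ W : Fin n → Q, Monotone W ∧ ∀ w, Nat.card {x // W x = w} = M w := by
  have e : Fin n ≃ Σ w, Fin (M w) := Fintype.equivOfCardEq (by simp [hM])
  let W : Fin n → Q := fun x => (e x).1
  refine ⟨W ∘ Tuple.sort W, Tuple.monotone_sort W, fun w => ?_⟩
  calc Nat.card {x // W (Tuple.sort W x) = w}
      = Nat.card {p : Σ w, Fin (M w) // p.1 = w} :=
        Nat.card_congr (((Tuple.sort W).trans e).subtypeEquiv fun _ => Iff.rfl)
    _ = Nat.card (Fin (M w)) := Nat.card_congr (Equiv.sigmaSubtype w)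
    _ = M w := Nat.card_fin _

theorem monotone_unique_of_card_fiber_eq {Q : Type*} [PartialOrder Q] {n : ℕ} {W W' : Fin n → Q}
    (hW : Monotone W) (hW' : Monotone W')
    (hcard : ∀ w, Nat.card {x // W x = w} = Nat.card {x // W' x = w}) : W = W' := by
  let e : Equiv.Perm (Fin n) := Equiv.ofFiberEquiv fun w => (Finite.card_eq.1 (hcard w)).some
  have he : W' ∘ e = W := funext (Equiv.ofFiberEquiv_map _)
  rw [← he] at hW ⊢
  exact Tuple.unique_monotone hW (τ := 1) hW'

theorem existsUnique_signedMonotone {Q : Type*} [LinearOrder Q] [Fintype Q] (s : Q → ℤˣ)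
    (σ : Equiv.Perm Q) {n : ℕ} {M : Q → ℕ} (hσ : ∀ w, M (σ w) = M w) (hM : ∑ w, M w = n) :
    ∃! p : Equiv.Perm (Fin n) × (Fin n → Q), Function.Semiconj p.2 p.1 σ ∧
      SignedMonotone s p.1 p.2 ∧ ∀ w, Nat.card {x // p.2 x = w} = M w := by
  obtain ⟨W, hW, hcard⟩ := exists_monotone_card_fiber_eq hM
  obtain ⟨π, hsemi, hmono⟩ := exists_perm_signedMonotone s σ hW fun w => by
    rw [hcard, hcard, hσ]
  refine ⟨(π, W), ⟨hsemi, hmono, hcard⟩, ?_⟩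
  rintro ⟨π', W'⟩ ⟨hsemi', hmono', hcard'⟩
  obtain rfl : W' = W :=
    monotone_unique_of_card_fiber_eq hmono'.monotone hW fun w => (hcard' w).trans (hcard w).symm
  exact congrArg (·, W') (hmono'.perm_unique hsemi' hsemi hmono σ.injective)

/-! ### Periods inside the fibres -/

/-- The number of fixed points of a permutation of `M` linearly ordered points which is increasing
if `s = 1` and decreasing if `s = -1`. -/
def fixedPart (s : ℤˣ) (M : ℕ) : ℕ := if s = 1 then M else M % 2

/-- The number of two-cycles of a permutation of `M` linearly ordered points which is increasing
if `s = 1` and decreasing if `s = -1`. -/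
def swappedPart (s : ℤˣ) (M : ℕ) : ℕ := if s = 1 then 0 else M / 2

theorem fixedPart_add_two_mul_swappedPart (s : ℤˣ) (M : ℕ) :
    fixedPart s M + 2 * swappedPart s M = M := by
  unfold fixedPart swappedPart
  split_ifs <;> omega

theorem involutive_of_strictAnti {α : Type*} [LinearOrder α] [Finite α] {τ : α → α}
    (hτ : StrictAnti τ) : Function.Involutive τ :=
  congrFun (eq_id_of_strictMono (hτ.comp hτ))

theorem card_fixedPoints_of_strictAnti {α : Type*} [LinearOrder α] [Finite α] {τ : α → α}
    (hτ : StrictAnti τ) : Nat.card {x // τ x = x} = Nat.card α % 2 := by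
  have := Fintype.ofFinite α
  have hle : Nat.card {x // τ x = x} ≤ 1 := by
    refine Finite.card_le_one_iff_subsingleton.2 ⟨fun ⟨x, hx⟩ ⟨y, hy⟩ => Subtype.ext ?_⟩
    refine le_antisymm (not_lt.1 fun h => ?_) (not_lt.1 fun h => ?_)
    · exact h.not_gt (by simpa only [hx, hy] using hτ h)
    · exact h.not_gt (by simpa only [hx, hy] using hτ h)
  have hmod : Nat.card α ≡ Nat.card {x // τ x = x} [MOD 2] := by
    have hsq : (show Function.End α from τ) ^ 2 ^ 1 = 1 := by
      rw [pow_one, sq]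
      exact funext (involutive_of_strictAnti hτ)
    rw [Nat.card_eq_fintype_card, Nat.card_eq_fintype_card]
    exact Equiv.Perm.card_fixedPoints_modEq hsq
  exact (Nat.mod_eq_of_lt (by omega)).symm.trans hmod.symm

theorem card_fixedPoints_of_signed {α : Type*} [LinearOrder α] [Finite α] {τ : α → α} {s : ℤˣ}
    (hpos : s = 1 → StrictMono τ) (hneg : s = -1 → StrictAnti τ) :
    Nat.card {x // τ x = x} = fixedPart s (Nat.card α) := by
  rcases Int.units_eq_one_or s with rfl | rfl
  · simp [fixedPart, eq_id_of_strictMono (hpos rfl)]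
  · simpa [fixedPart] using card_fixedPoints_of_strictAnti (hneg rfl)

theorem minimalPeriod_eq_mul_of_semiconj {α Q : Type*} {σ : Q → Q} {π : α → α} {W : α → Q}
    (hW : Function.Semiconj W π σ) (x : α) :
    Function.minimalPeriod π x = Function.minimalPeriod σ (W x) *
      Function.minimalPeriod π^[Function.minimalPeriod σ (W x)] x := by
  have hdvd : Function.minimalPeriod σ (W x) ∣ Function.minimalPeriod π x :=
    ((Function.isPeriodicPt_minimalPeriod π x).map hW).minimalPeriod_dvd
  rcases eq_or_ne (Function.minimalPeriod σ (W x)) 0 with hp | hp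
  · rw [hp, zero_mul]
    exact Nat.eq_zero_of_zero_dvd (hp ▸ hdvd)
  · rw [Function.minimalPeriod_iterate_eq_div_gcd hp, Nat.gcd_eq_right hdvd,
      Nat.mul_div_cancel' hdvd]

section

variable {α Q : Type*} [LinearOrder α] [PartialOrder Q] {s : Q → ℤˣ} {σ : Q → Q}
  {π : α → α} {W : α → Q} {w : Q}

theorem SignedMonotone.iterate_lt_on_fiber (h : SignedMonotone s π W)
    (hW : Function.Semiconj W π σ) (j : ℕ) {x y : α} (hx : W x = w) (hy : W y = w) (hxy : x < y) :
    (orbitProd s σ j w = 1 → π^[j] x < π^[j] y) ∧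
      (orbitProd s σ j w = -1 → π^[j] y < π^[j] x) := by
  have hword {z : α} (hz : W z = w) (i : ℕ) : W (π^[i] z) = σ^[i] w := by
    rw [(hW.iterate_right i).eq, hz]
  have hprod : orbitProd (s ∘ W) π j x = orbitProd s σ j w :=
    orbitProd_congr fun i _ => congrArg s (hword hx i)
  rw [← hprod]
  exact h.iterate_lt_iterate hxy fun i _ => (hword hx i).trans (hword hy i).symm

variable [Finite α]

theorem SignedMonotone.iterate_fiber (h : SignedMonotone s π W) (hW : Function.Semiconj W π σ) :
    (∀ x, W x = w → π^[2 * Function.minimalPeriod σ w] x = x) ∧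
      Nat.card {x // W x = w ∧ π^[Function.minimalPeriod σ w] x = x} =
        fixedPart (orbitProd s σ (Function.minimalPeriod σ w) w) (Nat.card {x // W x = w}) := by
  set p := Function.minimalPeriod σ w with hp
  let τ (x : {x // W x = w}) : {x // W x = w} :=
    ⟨π^[p] x, by rw [(hW.iterate_right p).eq, x.2, hp, Function.iterate_minimalPeriod]⟩
  have hpos (hs : orbitProd s σ p w = 1) : StrictMono τ :=
    fun x y hxy => (h.iterate_lt_on_fiber hW p x.2 y.2 hxy).1 hs
  have hneg (hs : orbitProd s σ p w = -1) : StrictAnti τ :=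
    fun x y hxy => (h.iterate_lt_on_fiber hW p x.2 y.2 hxy).2 hs
  constructor
  · intro x hx
    have hτ : τ (τ ⟨x, hx⟩) = ⟨x, hx⟩ := by
      rcases Int.units_eq_one_or (orbitProd s σ p w) with hs | hs
      · simp only [eq_id_of_strictMono (hpos hs), id]
      · exact involutive_of_strictAnti (hneg hs) _
    rw [two_mul, Function.iterate_add_apply]
    exact congrArg Subtype.val hτ
  · rw [← card_fixedPoints_of_signed hpos hneg]
    refine Nat.card_congr ((Equiv.subtypeSubtypeEquivSubtypeInter _ _).symm.trans
      (Equiv.subtypeEquivRight fun x => ?_))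
    exact (Subtype.ext_iff (a1 := τ x) (a2 := x)).symm

theorem SignedMonotone.minimalPeriod_eq_ite (h : SignedMonotone s π W)
    (hW : Function.Semiconj W π σ) {p : ℕ} (hp : Function.minimalPeriod σ w = p) {x : α}
    (hx : W x = w) : Function.minimalPeriod π x = if π^[p] x = x then p else 2 * p := by
  have hmul := minimalPeriod_eq_mul_of_semiconj hW x
  rw [hx, hp] at hmul
  split_ifs with hfix
  · rw [hmul, Function.minimalPeriod_eq_one_iff_isFixedPt.2 hfix, mul_one]
  · have hsq : Function.IsPeriodicPt π^[p] 2 x := by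
      rw [Function.IsPeriodicPt, Function.IsFixedPt, ← Function.iterate_mul, mul_comm, ← hp]
      exact (h.iterate_fiber hW).1 x hx
    rw [hmul, Function.minimalPeriod_eq_prime hsq hfix, mul_comm]

theorem SignedMonotone.card_fiber_minimalPeriod_eq (h : SignedMonotone s π W)
    (hW : Function.Semiconj W π σ) {p M : ℕ} (hp : Function.minimalPeriod σ w = p)
    (hM : Nat.card {x // W x = w} = M) (i : ℕ) :
    Nat.card {x // W x = w ∧ Function.minimalPeriod π x = i} =
      (if p = i then fixedPart (orbitProd s σ p w) M else 0) +
        if 2 * p = i then 2 * swappedPart (orbitProd s σ p w) M else 0 := by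
  have := Fintype.ofFinite α
  let F : Finset α := {x | W x = w}
  have hfixed : (F.filter fun x => π^[p] x = x).card = fixedPart (orbitProd s σ p w) M := by
    rw [← hM, ← hp, ← (h.iterate_fiber hW).2, Nat.card_eq_fintype_card, Fintype.card_subtype,
      Finset.filter_filter]
  have hswapped : (F.filter fun x => ¬π^[p] x = x).card =
      2 * swappedPart (orbitProd s σ p w) M := by
    have hF : F.card = M := by
      rw [← hM, Nat.card_eq_fintype_card, Fintype.card_subtype]
    have hsplit := Finset.card_filter_add_card_filter_not (s := F) (fun x => π^[p] x = x)
    have hparts := fixedPart_add_two_mul_swappedPart (orbitProd s σ p w) M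
    omega
  calc Nat.card {x // W x = w ∧ Function.minimalPeriod π x = i}
      = ∑ x ∈ F, if π^[p] x = x then (if p = i then 1 else 0) else if 2 * p = i then 1 else 0 := by
        rw [Nat.card_eq_fintype_card, Fintype.card_subtype, ← Finset.filter_filter,
          Finset.card_filter]
        refine Finset.sum_congr rfl fun x hx => ?_
        rw [h.minimalPeriod_eq_ite hW hp (Finset.mem_filter.1 hx).2]
        split_ifs <;> rfl
    _ = _ := by
        rw [Finset.sum_ite, Finset.sum_const, Finset.sum_const, hfixed, hswapped, smul_eq_mul,
          smul_eq_mul, mul_ite, mul_ite, mul_one, mul_one, mul_zero, mul_zero]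

end

/-! ### Orbits and cycle types -/

section

variable {Q : Type*} [Finite Q] (σ : Equiv.Perm Q)

theorem card_sameCycle (w : Q) : Nat.card {v // σ.SameCycle v w} = Function.minimalPeriod σ w := by
  have := Fintype.ofFinite (MulAction.orbit (Subgroup.zpowers σ) w)
  have horbit (v : Q) : σ.SameCycle v w ↔ v ∈ MulAction.orbit (Subgroup.zpowers σ) w := by
    rw [Equiv.Perm.sameCycle_comm, MulAction.mem_orbit_iff, Subgroup.exists_zpowers]
    rfl
  rw [Nat.card_congr (Equiv.subtypeEquivRight horbit), Nat.card_eq_fintype_card]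
  exact (MulAction.minimalPeriod_eq_card (a := σ) (b := w)).symm

theorem minimalPeriod_perm_pos (w : Q) : 0 < Function.minimalPeriod σ w :=
  Function.minimalPeriod_pos_of_mem_periodicPts (Function.mem_periodicPts.2
    ⟨orderOf σ, orderOf_pos σ, by
      rw [Function.IsPeriodicPt, Function.IsFixedPt, ← Equiv.Perm.coe_pow, pow_orderOf_eq_one,
        Equiv.Perm.coe_one, id]⟩)

end

theorem minimalPeriod_eq_card_support {α : Type*} [DecidableEq α] [Fintype α]
    {π c : Equiv.Perm α} {x : α} (hc : c ∈ π.cycleFactorsFinset) (hx : x ∈ c.support) :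
    Function.minimalPeriod π x = c.support.card := by
  have hπx : x ∈ π.support := Equiv.Perm.mem_cycleFactorsFinset_support_le hc hx
  rw [← card_sameCycle, Nat.card_eq_fintype_card, Equiv.Perm.cycle_is_cycleOf hx hc]
  refine Fintype.card_of_subtype _ fun y => ?_
  rw [Equiv.Perm.mem_support_cycleOf_iff, and_iff_left hπx, Equiv.Perm.sameCycle_comm]

theorem card_filter_minimalPeriod_eq_of_one_lt {α : Type*} [DecidableEq α] [Fintype α]
    (π : Equiv.Perm α) {i : ℕ} (hi : 1 < i) :
    (Finset.univ.filter fun x => Function.minimalPeriod π x = i).card =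
      i * π.cycleType.count i := by
  set C := π.cycleFactorsFinset.filter fun c => i = c.support.card with hC
  have hunion : (Finset.univ.filter fun x => Function.minimalPeriod π x = i) =
      C.biUnion Equiv.Perm.support := by
    ext x
    simp only [hC, Finset.mem_filter, Finset.mem_univ, true_and, Finset.mem_biUnion]
    constructor
    · intro hx
      have hπx : x ∈ π.support := Equiv.Perm.mem_support.2 fun hfix => by
        rw [Function.minimalPeriod_eq_one_iff_isFixedPt.2 hfix] at hx
        omega
      obtain ⟨c, hc, hxc⟩ :=
        Equiv.Perm.mem_support_iff_mem_support_of_mem_cycleFactorsFinset.1 hπx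
      exact ⟨c, ⟨hc, by rw [← minimalPeriod_eq_card_support hc hxc, hx]⟩, hxc⟩
    · rintro ⟨c, ⟨hc, rfl⟩, hxc⟩
      exact minimalPeriod_eq_card_support hc hxc
  have hdisjoint : (C : Set (Equiv.Perm α)).PairwiseDisjoint Equiv.Perm.support :=
    fun c hc d hd hcd => Equiv.Perm.disjoint_iff_disjoint_support.1
      (Equiv.Perm.cycleFactorsFinset_pairwise_disjoint π (Finset.mem_filter.1 hc).1
        (Finset.mem_filter.1 hd).1 hcd)
  have hcount : π.cycleType.count i = C.card := by
    rw [Equiv.Perm.cycleType_def, Multiset.count_map, hC, Finset.card_def, Finset.filter_val]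
    rfl
  rw [hunion, Finset.card_biUnion hdisjoint, hcount, mul_comm, ← smul_eq_mul]
  exact Finset.sum_eq_card_nsmul fun c hc => (Finset.mem_filter.1 hc).2.symm

theorem card_filter_minimalPeriod_eq {n : ℕ} (π : Equiv.Perm (Fin n)) {i : ℕ} (hi : i ≠ 0) :
    (Finset.univ.filter fun x => Function.minimalPeriod π x = i).card =
      i * (fullCycleType n π).count i := by
  rw [fullCycleType, Multiset.count_add, Multiset.count_replicate]
  obtain rfl | hi' := (Nat.one_le_iff_ne_zero.2 hi).eq_or_lt
  · have hfixed : (Finset.univ.filter fun x => Function.minimalPeriod π x = 1) = π.supportᶜ := by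
      ext x
      simp [Function.minimalPeriod_eq_one_iff_isFixedPt, Function.IsFixedPt]
    have hone : 1 ∉ π.cycleType := fun h => by
      have := Equiv.Perm.two_le_of_mem_cycleType h
      omega
    rw [hfixed, Finset.card_compl, Fintype.card_fin, Multiset.count_eq_zero_of_notMem hone,
      if_pos rfl, zero_add, one_mul]
  · rw [card_filter_minimalPeriod_eq_of_one_lt π hi', if_neg (by omega), add_zero]

theorem count_zero_fullCycleType {n : ℕ} (π : Equiv.Perm (Fin n)) :
    (fullCycleType n π).count 0 = 0 := by
  have hzero : 0 ∉ π.cycleType := fun h => by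
    have := Equiv.Perm.two_le_of_mem_cycleType h
    omega
  rw [fullCycleType, Multiset.count_add, Multiset.count_replicate, if_neg one_ne_zero, add_zero,
    Multiset.count_eq_zero_of_notMem hzero]

theorem apply_eq_of_sameCycle {Q β : Type*} [Finite Q] {σ : Equiv.Perm Q} {F : Q → β}
    (hF : ∀ w, F (σ w) = F w) {v w : Q} (h : σ.SameCycle v w) : F v = F w := by
  obtain ⟨j, rfl⟩ := h.exists_nat_pow_eq
  clear h
  induction j with
  | zero => rfl
  | succ j ih => rw [ih, pow_succ', Equiv.Perm.mul_apply, hF]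

theorem orbitProd_period_apply {Q G : Type*} [Finite Q] [CommGroup G] (s : Q → G)
    (σ : Equiv.Perm Q) (w : Q) :
    orbitProd s σ (Function.minimalPeriod σ (σ w)) (σ w) =
      orbitProd s σ (Function.minimalPeriod σ w) w := by
  have hw : w ∈ Function.periodicPts σ :=
    Function.minimalPeriod_pos_iff_mem_periodicPts.1 (minimalPeriod_perm_pos σ w)
  set p := Function.minimalPeriod σ w with hp
  have hsucc : orbitProd s σ p (σ w) * s w = orbitProd s σ (p + 1) w := by
    simp only [orbitProd, Finset.prod_range_succ', Function.iterate_succ_apply,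
      Function.iterate_zero_apply]
  rw [Function.minimalPeriod_apply hw, ← hp]
  refine mul_right_cancel (hsucc.trans ?_)
  rw [orbitProd_succ, hp, Function.iterate_minimalPeriod]

/-- The orbits of a permutation, that is, its cycles including the trivial ones. -/
abbrev Orbit {Q : Type*} (σ : Equiv.Perm Q) : Type _ := Quotient (Equiv.Perm.SameCycle.setoid σ)

namespace Orbit

variable {Q : Type*} [Fintype Q] {σ : Equiv.Perm Q}

/-- The number of points of an orbit. -/
def length : Orbit σ → ℕ :=
  Quotient.lift (Function.minimalPeriod σ) fun _ _ => apply_eq_of_sameCycle fun w =>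
    Function.minimalPeriod_apply
      (Function.minimalPeriod_pos_iff_mem_periodicPts.1 (minimalPeriod_perm_pos σ w))

/-- The product of the signs `s` over the points of an orbit. -/
def sign (s : Q → ℤˣ) : Orbit σ → ℤˣ :=
  Quotient.lift (fun w => orbitProd s σ (Function.minimalPeriod σ w) w) fun _ _ h =>
    apply_eq_of_sameCycle (F := fun w => orbitProd s σ (Function.minimalPeriod σ w) w)
      (orbitProd_period_apply s σ) h

theorem length_pos (ν : Orbit σ) : 0 < ν.length := by
  induction ν using Quotient.ind with | _ w
  exact minimalPeriod_perm_pos σ w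

theorem sum_comp_mk {M : Type*} [AddCommMonoid M] (F : Orbit σ → M) :
    ∑ w : Q, F ⟦w⟧ = ∑ ν : Orbit σ, ν.length • F ν := by
  rw [← Finset.sum_fiberwise' (g := Quotient.mk (Equiv.Perm.SameCycle.setoid σ))]
  refine Finset.sum_congr rfl fun ν _ => ?_
  induction ν using Quotient.ind with | _ w
  rw [Finset.sum_const]
  congr 1
  rw [← Fintype.card_subtype, ← Nat.card_eq_fintype_card,
    Nat.card_congr (Equiv.subtypeEquivRight fun v => Quotient.eq)]
  exact card_sameCycle σ w

end Orbit

/-! ### Counting signed semiconjugacies by cycle type -/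

section

variable {α Q : Type*} {σ : Equiv.Perm Q} {π : Equiv.Perm α} {W : α → Q}

theorem card_fiber_apply_of_semiconj (hW : Function.Semiconj W π σ) (w : Q) :
    Nat.card {x // W x = σ w} = Nat.card {x // W x = w} :=
  (Nat.card_congr (π.subtypeEquiv fun x => by rw [hW.eq, σ.injective.eq_iff])).symm

/-- The sizes of the fibres of a semiconjugacy, as a function on the orbits of the target. -/
def orbitMultiplicity [Finite Q] (hW : Function.Semiconj W π σ) : Orbit σ → ℕ :=
  Quotient.lift (fun w => Nat.card {x // W x = w}) fun _ _ h =>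
    apply_eq_of_sameCycle (F := fun w => Nat.card {x // W x = w})
      (card_fiber_apply_of_semiconj hW) h

end

/-- The places for cycles that an orbit offers to a permutation mapping to it: one for the cycles
of the length of the orbit and one for the cycles of twice that length. -/
abbrev Slot {Q : Type*} (σ : Equiv.Perm Q) : Type _ := Orbit σ ⊕ Orbit σ

namespace Slot

variable {Q : Type*} [Fintype Q] {σ : Equiv.Perm Q} (s : Q → ℤˣ)

/-- The length of the cycles that go into a slot. -/
def size : Slot σ → ℕ := Sum.elim Orbit.length fun ν => 2 * ν.length

/-- The number of cycles in each slot when every point of the orbit `ν` has `F ν` preimages. -/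
def parts (F : Orbit σ → ℕ) : Slot σ → ℕ :=
  Sum.elim (fun ν => fixedPart (ν.sign s) (F ν)) fun ν => swappedPart (ν.sign s) (F ν)

/-- The possible numbers of cycles in a slot: a positive orbit takes any number of cycles of its
own length, a negative one at most one of them and any number of cycles of twice its length. -/
def allowed : Slot σ → Set ℕ :=
  Sum.elim (fun ν => if ν.sign s = 1 then Set.univ else {0, 1})
    fun ν => if ν.sign s = 1 then {0} else Set.univ

theorem parts_mem_allowed (F : Orbit σ → ℕ) (t : Slot σ) : parts s F t ∈ allowed s t := by
  rcases t with ν | ν <;>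
    simp only [parts, allowed, fixedPart, swappedPart, Sum.elim_inl, Sum.elim_inr] <;>
    split_ifs <;> simp
  omega

theorem parts_inl_add_two_mul (F : Orbit σ → ℕ) (ν : Orbit σ) :
    parts s F (.inl ν) + 2 * parts s F (.inr ν) = F ν :=
  fixedPart_add_two_mul_swappedPart _ _

theorem parts_injective : Function.Injective (parts (σ := σ) s) := fun F G h =>
  funext fun ν => by rw [← parts_inl_add_two_mul s F, h, parts_inl_add_two_mul]

theorem parts_of_mem_allowed {L : Slot σ → ℕ} (hL : ∀ t, L t ∈ allowed s t) :
    parts s (fun ν => L (.inl ν) + 2 * L (.inr ν)) = L := by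
  funext t
  rcases t with ν | ν <;> have h₁ := hL (.inl ν) <;> have h₂ := hL (.inr ν) <;>
    simp only [parts, allowed, fixedPart, swappedPart, Sum.elim_inl, Sum.elim_inr] at h₁ h₂ ⊢ <;>
    split_ifs at h₁ h₂ ⊢ <;> simp at h₁ h₂ <;> omega

theorem sum_size_mul_parts (F : Orbit σ → ℕ) :
    ∑ t : Slot σ, t.size * parts s F t = ∑ w : Q, F ⟦w⟧ := by
  rw [Orbit.sum_comp_mk, Fintype.sum_sum_type, ← Finset.sum_add_distrib]
  refine Finset.sum_congr rfl fun ν _ => ?_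
  rw [← parts_inl_add_two_mul s F ν, smul_eq_mul]
  simp only [size, Sum.elim_inl, Sum.elim_inr]
  ring

theorem size_pos (t : Slot σ) : 0 < t.size := by
  rcases t with ν | ν
  · exact ν.length_pos
  · exact Nat.mul_pos two_pos ν.length_pos

end Slot

theorem SignedMonotone.count_fullCycleType_eq {Q : Type*} [LinearOrder Q] [Fintype Q] {s : Q → ℤˣ}
    {σ : Equiv.Perm Q} {n : ℕ} {π : Equiv.Perm (Fin n)} {W : Fin n → Q}
    (h : SignedMonotone s π W) (hW : Function.Semiconj W π σ) (i : ℕ) :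
    (fullCycleType n π).count i =
      ∑ t : Slot σ with t.size = i, Slot.parts s (orbitMultiplicity hW) t := by
  rcases eq_or_ne i 0 with rfl | hi
  · rw [count_zero_fullCycleType, Finset.filter_false_of_mem fun t _ => t.size_pos.ne',
      Finset.sum_empty]
  refine Nat.eq_of_mul_eq_mul_left (Nat.pos_of_ne_zero hi) ?_
  let L := Slot.parts s (orbitMultiplicity hW)
  let H (ν : Orbit σ) : ℕ :=
    (if Slot.size (σ := σ) (.inl ν) = i then L (.inl ν) else 0) +
      if Slot.size (σ := σ) (.inr ν) = i then 2 * L (.inr ν) else 0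
  calc i * (fullCycleType n π).count i
      = ∑ w, Nat.card {x // W x = w ∧ Function.minimalPeriod π x = i} := by
        rw [← card_filter_minimalPeriod_eq π hi,
          Finset.card_eq_sum_card_fiberwise (f := W) (t := Finset.univ) fun _ _ => by simp]
        refine Finset.sum_congr rfl fun w _ => ?_
        simp_rw [Nat.card_eq_fintype_card, Fintype.card_subtype, Finset.filter_filter, and_comm]
    _ = ∑ w : Q, H ⟦w⟧ :=
        Finset.sum_congr rfl fun w _ => h.card_fiber_minimalPeriod_eq hW rfl rfl i
    _ = ∑ ν, ν.length * H ν := Orbit.sum_comp_mk H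
    _ = i * ∑ t : Slot σ with t.size = i, L t := by
        rw [Finset.sum_filter, Fintype.sum_sum_type, ← Finset.sum_add_distrib, Finset.mul_sum]
        refine Finset.sum_congr rfl fun ν _ => ?_
        have hinl (h : Slot.size (σ := σ) (.inl ν) = i) : ν.length = i := h
        have hinr (h : Slot.size (σ := σ) (.inr ν) = i) : 2 * ν.length = i := h
        simp only [H, mul_add]
        congr 1
        · split_ifs with h
          · rw [hinl h]
          · rfl
        · split_ifs with h
          · rw [← hinr h]
            ring
          · rfl

theorem orbitMultiplicity_injective {Q : Type*} [LinearOrder Q] [Finite Q] {s : Q → ℤˣ}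
    {σ : Equiv.Perm Q} {n : ℕ} {π π' : Equiv.Perm (Fin n)} {W W' : Fin n → Q}
    (hW : Function.Semiconj W π σ) (hW' : Function.Semiconj W' π' σ)
    (h : SignedMonotone s π W) (h' : SignedMonotone s π' W')
    (heq : orbitMultiplicity hW = orbitMultiplicity hW') : π = π' ∧ W = W' := by
  have := Fintype.ofFinite Q
  have hsum : ∑ w, Nat.card {x // W x = w} = n := by
    rw [← Nat.card_sigma, Nat.card_congr (Equiv.sigmaFiberEquiv W), Nat.card_fin]
  exact Prod.mk.inj ((existsUnique_signedMonotone s σ (card_fiber_apply_of_semiconj hW) hsum).unique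
    ⟨hW, h, fun _ => rfl⟩ ⟨hW', h', fun w => (congrFun heq ⟦w⟧).symm⟩)

theorem sum_mul_eq_of_fiberwise {S : Type*} [Fintype S] {size : S → ℕ} {L : S → ℕ} {m : ℕ → ℕ}
    {n : ℕ} (hL : ∀ i, ∑ t with size t = i, L t = m i) (hm0 : m 0 = 0)
    (hm : ∀ i, n < i → m i = 0) :
    ∑ t, size t * L t = ∑ i ∈ Finset.Icc 1 n, i * m i := by
  have hsupport (t : S) (ht : L t ≠ 0) : size t ∈ Finset.Icc 1 n := by
    have hne : m (size t) ≠ 0 := fun h => ht <|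
      Finset.sum_eq_zero_iff.1 ((hL (size t)).trans h) t (by simp)
    exact Finset.mem_Icc.2 ⟨Nat.one_le_iff_ne_zero.2 fun h => hne (h ▸ hm0),
      not_lt.1 fun h => hne (hm _ h)⟩
  simp_rw [← hL, Finset.mul_sum, Finset.sum_filter]
  rw [Finset.sum_comm]
  refine Finset.sum_congr rfl fun t _ => ?_
  rw [Finset.sum_ite_eq]
  split_ifs with ht
  · rfl
  · rw [not_not.1 (mt (hsupport t) ht), mul_zero]

theorem card_signedMonotone_semiconj {Q : Type*} [LinearOrder Q] [Fintype Q] (s : Q → ℤˣ)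
    (σ : Equiv.Perm Q) {n : ℕ} {m : ℕ → ℕ} (hm0 : m 0 = 0) (hm : ∀ i, n < i → m i = 0)
    (hsum : ∑ i ∈ Finset.Icc 1 n, i * m i = n) :
    Nat.card {p : Equiv.Perm (Fin n) × (Fin n → Q) // Function.Semiconj p.2 p.1 σ ∧
        SignedMonotone s p.1 p.2 ∧ ∀ i, (fullCycleType n p.1).count i = m i} =
      Nat.card {L : Slot σ → ℕ // (∀ t, L t ∈ Slot.allowed s t) ∧
        ∀ i, ∑ t with t.size = i, L t = m i} := by
  refine Nat.card_congr (Equiv.ofBijective (fun p => ⟨Slot.parts s (orbitMultiplicity p.2.1),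
    Slot.parts_mem_allowed s _, fun i => by rw [← p.2.2.1.count_fullCycleType_eq, p.2.2.2]⟩)
    ⟨fun p p' heq => ?_, fun ⟨L, hL, hsize⟩ => ?_⟩)
  · have hmult := Slot.parts_injective s (congrArg Subtype.val heq)
    obtain ⟨hπ, hW⟩ := orbitMultiplicity_injective p.2.1 p'.2.1 p.2.2.1 p'.2.2.1 hmult
    exact Subtype.ext (Prod.ext hπ hW)
  · let F (ν : Orbit σ) : ℕ := L (.inl ν) + 2 * L (.inr ν)
    have hparts : Slot.parts s F = L := Slot.parts_of_mem_allowed s hL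
    have hcard : ∑ w : Q, F ⟦w⟧ = n := by
      rw [← Slot.sum_size_mul_parts s, hparts, sum_mul_eq_of_fiberwise hsize hm0 hm, hsum]
    have hinv (w : Q) : F ⟦σ w⟧ = F ⟦w⟧ :=
      congrArg F (Quotient.sound (Equiv.Perm.sameCycle_apply_left.2 .rfl))
    obtain ⟨⟨π, W⟩, ⟨hW, h, hM⟩, -⟩ := existsUnique_signedMonotone s σ hinv hcard
    have hmult : orbitMultiplicity hW = F := funext (Quotient.ind hM)
    refine ⟨⟨(π, W), hW, h, fun i => ?_⟩, Subtype.ext ?_⟩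
    · rw [h.count_fullCycleType_eq hW, hmult, hparts, hsize]
    · exact (congrArg (Slot.parts s) hmult).trans hparts

/-! ### Generating functions of slot contents -/

section

variable {S : Type*} [Fintype S] (T : S → Set ℕ)

theorem coeff_prod_mk_indicator (m : ℕ) :
    coeff m (∏ t, mk ((T t).indicator 1) : PowerSeries ℚ) =
      Nat.card {L : S → ℕ // (∀ t, L t ∈ T t) ∧ ∑ t, L t = m} := by
  let contents := (Finset.finsuppAntidiag Finset.univ m).filter fun L : S →₀ ℕ => ∀ t, L t ∈ T t
  let e : {L : S → ℕ // (∀ t, L t ∈ T t) ∧ ∑ t, L t = m} ≃ contents :=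
    (Finsupp.equivFunOnFinite.subtypeEquiv fun L => by
      simp [contents, Finset.mem_finsuppAntidiag, and_comm]).symm
  rw [Nat.card_congr e, Nat.card_eq_fintype_card, Fintype.card_coe, Finset.card_filter, coeff_prod,
    Nat.cast_sum]
  refine Finset.sum_congr rfl fun L _ => ?_
  simp only [coeff_mk, Set.indicator_apply, Pi.one_apply, Fintype.prod_ite_zero,
    Finset.prod_const_one, Nat.cast_ite, Nat.cast_one, Nat.cast_zero]

theorem card_constrained_eq_prod {ι : Type*} [Fintype ι] [DecidableEq ι] (size : S → ι)
    (m : ι → ℕ) :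
    Nat.card {L : S → ℕ // (∀ t, L t ∈ T t) ∧ ∀ i, ∑ t with size t = i, L t = m i} =
      ∏ i, Nat.card {L : {t // size t = i} → ℕ // (∀ t, L t ∈ T t.1) ∧ ∑ t, L t = m i} := by
  rw [← Nat.card_pi]
  let e : (S → ℕ) ≃ ∀ i, {t // size t = i} → ℕ :=
    ((Equiv.sigmaFiberEquiv size).symm.arrowCongr (Equiv.refl ℕ)).trans
      (Equiv.piCurry fun _ _ => ℕ)
  let contents (i : ι) (L : {t // size t = i} → ℕ) : Prop :=
    (∀ t, L t ∈ T t.1) ∧ ∑ t, L t = m i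
  refine Nat.card_congr ((e.subtypeEquiv fun L => ?_).trans
    (Equiv.subtypePiEquivPi (p := fun {i} => contents i)))
  have hvalue (i : ι) (t : {t // size t = i}) : e L i t = L t := rfl
  have hsum (i : ι) : ∑ t with size t = i, L t = ∑ t : {t // size t = i}, L t :=
    Finset.sum_subtype _ (by simp) _
  simp only [contents, hvalue, hsum, forall_and, Subtype.forall]
  exact and_congr_left' ⟨fun h _ t _ => h t, fun h t => h _ t rfl⟩

omit [Fintype S] in
theorem coeff_zero_prod_mk_indicator (hT : ∀ t, 0 ∈ T t) (F : Finset S) :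
    coeff 0 (∏ t ∈ F, mk ((T t).indicator 1) : PowerSeries ℚ) = 1 := by
  rw [coeff_zero_eq_constantCoeff_apply, map_prod]
  exact Finset.prod_eq_one fun t _ => by
    rw [← coeff_zero_eq_constantCoeff_apply, coeff_mk, Set.indicator_of_mem (hT t), Pi.one_apply]

theorem card_constrained_eq_prod_coeff (hT : ∀ t, 0 ∈ T t) (size : S → ℕ) {m : ℕ → ℕ}
    {I : Finset ℕ} (hI : ∀ i, m i ≠ 0 → i ∈ I) :
    (Nat.card {L : S → ℕ // (∀ t, L t ∈ T t) ∧ ∀ i, ∑ t with size t = i, L t = m i} : ℚ) =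
      ∏ i ∈ I, coeff (m i) (∏ t with size t = i, mk ((T t).indicator 1) : PowerSeries ℚ) := by
  let J := I ∪ Finset.univ.image size
  have hJ (t : S) : size t ∈ J :=
    Finset.mem_union_right _ (Finset.mem_image_of_mem _ (Finset.mem_univ t))
  let size' (t : S) : J := ⟨size t, hJ t⟩
  have hsize' (i : J) (t : S) : size' t = i ↔ size t = i := Subtype.ext_iff
  have hiff (L : S → ℕ) : (∀ i, ∑ t with size t = i, L t = m i) ↔
      ∀ i : J, ∑ t with size' t = i, L t = m i := by
    simp only [hsize', Subtype.forall]
    refine ⟨fun h i _ => h i, fun h i => ?_⟩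
    by_cases hi : i ∈ J
    · exact h i hi
    · have hempty (t : S) : size t ≠ i := fun ht => hi (ht ▸ hJ t)
      rw [Finset.filter_false_of_mem fun t _ => hempty t, Finset.sum_empty,
        not_not.1 (mt (hI i) (mt (Finset.mem_union_left _) hi))]
  have hcoeff (i : J) :
      (Nat.card {L : {t // size' t = i} → ℕ // (∀ t, L t ∈ T t.1) ∧ ∑ t, L t = m i} : ℚ) =
        coeff (m i) (∏ t with size t = i, mk ((T t).indicator 1)) := by
    rw [← coeff_prod_mk_indicator, Finset.prod_subtype (p := fun t => size' t = i)]
    simp [hsize']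
  rw [Nat.card_congr (Equiv.subtypeEquivRight fun L => and_congr_right' (hiff L)),
    card_constrained_eq_prod T size' fun i => m i, Nat.cast_prod,
    Finset.prod_congr rfl fun i _ => hcoeff i,
    Finset.prod_coe_sort J fun i => coeff (m i) (∏ t with size t = i, mk ((T t).indicator 1))]
  refine (Finset.prod_subset Finset.subset_union_left fun i _ hi => ?_).symm
  rw [not_not.1 (mt (hI i) hi), coeff_zero_prod_mk_indicator T hT]

end

theorem mk_indicator_univ : (mk (Set.univ.indicator 1) : PowerSeries ℚ) = (1 - X)⁻¹ := by
  rw [Set.indicator_univ, eq_inv_iff_mul_eq_one (by simp)]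
  exact mk_one_mul_one_sub_eq_one ℚ

theorem mk_indicator_zero : (mk (({0} : Set ℕ).indicator 1) : PowerSeries ℚ) = 1 := by
  ext j
  rw [coeff_mk, coeff_one, Set.indicator_apply]
  rfl

theorem mk_indicator_zero_one : (mk (({0, 1} : Set ℕ).indicator 1) : PowerSeries ℚ) = 1 + X := by
  ext j
  rcases j with _ | _ | j <;> simp [coeff_one, coeff_X]

namespace Slot

variable {Q : Type*} [Fintype Q] {σ : Equiv.Perm Q} (s : Q → ℤˣ)

theorem zero_mem_allowed (t : Slot σ) : 0 ∈ allowed s t := by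
  rcases t with ν | ν <;> simp only [allowed, Sum.elim_inl, Sum.elim_inr] <;> split_ifs <;> simp

theorem prod_mk_indicator_allowed (i : ℕ) :
    (∏ t : Slot σ with t.size = i, mk ((allowed s t).indicator 1) : PowerSeries ℚ) =
      (1 + X) ^ (Nat.card {ν : Orbit σ // ν.length = i ∧ ν.sign s = -1}) *
        ((1 - X)⁻¹) ^ (Nat.card {ν : Orbit σ // ν.length = i ∧ ν.sign s = 1} +
          Nat.card {ν : Orbit σ // 2 * ν.length = i ∧ ν.sign s = -1}) := by
  have hpow (p : Orbit σ → Prop) (f : PowerSeries ℚ) :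
      f ^ Nat.card {ν // p ν} = ∏ ν, if p ν then f else 1 := by
    rw [← Finset.prod_filter, Finset.prod_const, Nat.card_eq_fintype_card, Fintype.card_subtype]
  rw [Finset.prod_filter, Fintype.prod_sum_type, pow_add, hpow, hpow, hpow]
  simp only [← Finset.prod_mul_distrib]
  refine Finset.prod_congr rfl fun ν _ => ?_
  have hne : (1 : ℤˣ) ≠ -1 := by decide
  rcases Int.units_eq_one_or (ν.sign s) with h | h <;>
    simp only [size, allowed, Sum.elim_inl, Sum.elim_inr, h, hne, hne.symm, if_true, if_false,
      mk_indicator_univ, mk_indicator_zero, mk_indicator_zero_one, ite_self, and_true, and_false,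
      one_mul, mul_one]

end Slot

theorem card_signedMonotone_semiconj_eq_prod_Ncoef {Q : Type*} [LinearOrder Q] [Fintype Q]
    (s : Q → ℤˣ) (σ : Equiv.Perm Q) {n : ℕ} {m g : ℕ → ℕ} (hm0 : m 0 = 0)
    (hm : ∀ i, n < i → m i = 0) (hsum : ∑ i ∈ Finset.Icc 1 n, i * m i = n)
    (hneg : ∀ i ∈ Finset.Icc 1 n, Nat.card {ν : Orbit σ // ν.length = i ∧ ν.sign s = -1} = g i)
    (hpos : ∀ i ∈ Finset.Icc 1 n, Nat.card {ν : Orbit σ // ν.length = i ∧ ν.sign s = 1} +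
      Nat.card {ν : Orbit σ // 2 * ν.length = i ∧ ν.sign s = -1} = g i) :
    (Nat.card {p : Equiv.Perm (Fin n) × (Fin n → Q) // Function.Semiconj p.2 p.1 σ ∧
        SignedMonotone s p.1 p.2 ∧ ∀ i, (fullCycleType n p.1).count i = m i} : ℚ) =
      ∏ i ∈ (Finset.Icc 1 n).filter (fun i => 1 ≤ m i), Ncoef (g i) (m i) := by
  rw [card_signedMonotone_semiconj s σ hm0 hm hsum,
    card_constrained_eq_prod_coeff (I := (Finset.Icc 1 n).filter (fun i => 1 ≤ m i))
      (Slot.allowed s) (Slot.zero_mem_allowed s) Slot.size fun i hi => ?_]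
  · refine Finset.prod_congr rfl fun i hi => ?_
    rw [Slot.prod_mk_indicator_allowed, hneg i (Finset.mem_filter.1 hi).1,
      hpos i (Finset.mem_filter.1 hi).1, Ncoef]
  · have hi0 : i ≠ 0 := fun h => hi (h ▸ hm0)
    have hin : i ≤ n := not_lt.1 fun h => hi (hm i h)
    simp only [Finset.mem_filter, Finset.mem_Icc]
    omega

/-! ### Counting orbits by Möbius inversion -/

theorem orbitProd_add {Q M : Type*} [CommMonoid M] (s : Q → M) (σ : Q → Q) (j k : ℕ) (w : Q) :
    orbitProd s σ (j + k) w = orbitProd s σ j w * orbitProd s σ k (σ^[j] w) := by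
  simp only [orbitProd, Finset.prod_range_add, ← Function.iterate_add_apply, add_comm]

theorem orbitProd_mul_of_isPeriodicPt {Q M : Type*} [CommMonoid M] (s : Q → M) {σ : Q → Q} {p : ℕ}
    {w : Q} (hw : Function.IsPeriodicPt σ p w) (q : ℕ) :
    orbitProd s σ (p * q) w = orbitProd s σ p w ^ q := by
  induction q with
  | zero => rw [mul_zero, orbitProd_zero, pow_zero]
  | succ q ih => rw [Nat.mul_succ, orbitProd_add, ih, (hw.mul_const q).eq, pow_succ]

section

variable {R : Type*}

theorem pmul_mul_pmul_of_map_mul [CommSemiring R] {χ : ArithmeticFunction R}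
    (hχ : ∀ a b, χ (a * b) = χ a * χ b) (f g : ArithmeticFunction R) :
    χ.pmul f * χ.pmul g = χ.pmul (f * g) := by
  ext n
  simp only [ArithmeticFunction.mul_apply, ArithmeticFunction.pmul_apply, Finset.mul_sum]
  refine Finset.sum_congr rfl fun x hx => ?_
  rw [← (Nat.mem_divisorsAntidiagonal.1 hx).1, hχ, mul_mul_mul_comm]

theorem pmul_moebius_mul_self [CommRing R] {χ : ArithmeticFunction R} (hχ₁ : χ 1 = 1)
    (hχ : ∀ a b, χ (a * b) = χ a * χ b) :
    χ.pmul (ArithmeticFunction.moebius : ArithmeticFunction R) * χ = 1 := by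
  calc χ.pmul (ArithmeticFunction.moebius : ArithmeticFunction R) * χ
      = χ.pmul (ArithmeticFunction.moebius : ArithmeticFunction R) *
          χ.pmul (ArithmeticFunction.zeta : ArithmeticFunction R) := by
        rw [ArithmeticFunction.pmul_zeta]
    _ = χ.pmul 1 := by
        rw [pmul_mul_pmul_of_map_mul hχ, ArithmeticFunction.coe_moebius_mul_coe_zeta]
    _ = 1 := by
        ext n
        rw [ArithmeticFunction.pmul_apply, ArithmeticFunction.one_apply]
        split_ifs with h
        · rw [h, hχ₁, one_mul]
        · rw [mul_zero]

end

theorem eq_sum_moebius_of_sum_odd_codivisors {F G : ℕ → ℤ} {i : ℕ} (hi : i ≠ 0)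
    (h : ∀ j, j ∣ i → ∑ d ∈ j.divisors with Odd (j / d), F d = G j) :
    F i = ∑ d ∈ i.divisors.filter (fun d => Odd d), ArithmeticFunction.moebius d * G (i / d) := by
  let χ : ArithmeticFunction ℤ := ⟨fun d => if Odd d then 1 else 0, by simp⟩
  let f : ArithmeticFunction ℤ := ⟨fun d => if d = 0 then 0 else F d, if_pos rfl⟩
  have hχ₁ : χ 1 = 1 := by simp [χ]
  have hχ (a b : ℕ) : χ (a * b) = χ a * χ b := by
    by_cases ha : Odd a <;> simp [χ, Nat.odd_mul, ha]
  have hconv (j : ℕ) (hj : j ∣ i) : (χ * f) j = G j := by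
    rw [ArithmeticFunction.mul_apply, Nat.sum_divisorsAntidiagonal' (fun x y => χ x * f y),
      ← h j hj, Finset.sum_filter]
    refine Finset.sum_congr rfl fun d hd => ?_
    simp [χ, f, (Nat.pos_of_mem_divisors hd).ne']
  calc F i = f i := (if_neg hi).symm
    _ = (χ.pmul ArithmeticFunction.moebius * (χ * f)) i := by
        rw [← mul_assoc, ← ArithmeticFunction.intCoe_int ArithmeticFunction.moebius,
          pmul_moebius_mul_self hχ₁ hχ, one_mul]
    _ = ∑ d ∈ i.divisors, χ.pmul ArithmeticFunction.moebius d * (χ * f) (i / d) := by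
        rw [ArithmeticFunction.mul_apply, Nat.sum_divisorsAntidiagonal
          (fun x y => χ.pmul ArithmeticFunction.moebius x * (χ * f) y)]
    _ = _ := by
        rw [Finset.sum_filter]
        refine Finset.sum_congr rfl fun d hd => ?_
        rw [hconv _ (Nat.div_dvd_of_dvd (Nat.dvd_of_mem_divisors hd))]
        rw [ArithmeticFunction.pmul_apply, mul_assoc]
        exact boole_mul _ _

theorem sum_mul_card_fiber {S : Type*} [Fintype S] (size : S → ℕ) (p : S → Prop) (D : Finset ℕ) :
    ∑ d ∈ D, (d : ℤ) * Nat.card {t // size t = d ∧ p t} =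
      ∑ t, if size t ∈ D ∧ p t then (size t : ℤ) else 0 := by
  simp only [Nat.card_eq_fintype_card, Fintype.card_subtype, Finset.card_filter, Nat.cast_sum,
    Nat.cast_ite, Nat.cast_one, Nat.cast_zero, Finset.mul_sum, mul_ite, mul_one, mul_zero, ite_and]
  rw [Finset.sum_comm]
  exact Finset.sum_congr rfl fun t _ => by rw [Finset.sum_ite_eq]

theorem eq_zero_of_sum_divisors_eq_zero {f : ℕ → ℤ} {i : ℕ} (hi : i ≠ 0)
    (h : ∀ j, j ∣ i → ∑ d ∈ j.divisors, f d = 0) : f i = 0 := by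
  rw [← (ArithmeticFunction.sum_eq_iff_sum_mul_moebius_eq_on (g := 0) {j | j ∣ i}
    fun _ _ => dvd_trans).1 (fun j _ hj => h j hj) i (Nat.pos_of_ne_zero hi) dvd_rfl]
  simp

namespace Orbit

variable {Q : Type*} [Fintype Q] {σ : Equiv.Perm Q}

theorem sum_isPeriodicPt_comp_mk [DecidableEq Q] {M : Type*} [AddCommMonoid M]
    (F : Orbit σ → M) (j : ℕ) :
    ∑ w with Function.IsPeriodicPt σ j w, F ⟦w⟧ =
      ∑ ν : Orbit σ with ν.length ∣ j, ν.length • F ν := by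
  have hlength (w : Q) : Function.IsPeriodicPt σ j w ↔ Orbit.length (σ := σ) ⟦w⟧ ∣ j :=
    Function.isPeriodicPt_iff_minimalPeriod_dvd
  simp only [Finset.sum_filter, hlength]
  rw [sum_comp_mk fun ν : Orbit σ => if ν.length ∣ j then F ν else 0]
  simp only [smul_ite, smul_zero]

theorem card_isPeriodicPt (j : ℕ) :
    Nat.card {w // Function.IsPeriodicPt σ j w} = ∑ ν : Orbit σ with ν.length ∣ j, ν.length := by
  rw [Nat.card_eq_fintype_card, Fintype.card_subtype, Finset.card_eq_sum_ones,
    sum_isPeriodicPt_comp_mk fun _ => 1]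
  simp only [smul_eq_mul, mul_one]

theorem sum_orbitProd [DecidableEq Q] (s : Q → ℤˣ) (j : ℕ) :
    ∑ w with Function.IsPeriodicPt σ j w, ((orbitProd s σ j w : ℤˣ) : ℤ) =
      ∑ ν : Orbit σ with ν.length ∣ j, ν.length * (ν.sign s : ℤ) ^ (j / ν.length) := by
  simp only [← nsmul_eq_mul]
  rw [← sum_isPeriodicPt_comp_mk fun ν => (ν.sign s : ℤ) ^ (j / ν.length)]
  refine Finset.sum_congr rfl fun w hw => ?_
  have hw' := (Finset.mem_filter.1 hw).2
  change _ = ((orbitProd s σ (Function.minimalPeriod σ w) w : ℤˣ) : ℤ) ^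
    (j / Function.minimalPeriod σ w)
  rw [← Units.val_pow_eq_pow_val, ← orbitProd_mul_of_isPeriodicPt s
    (Function.isPeriodicPt_minimalPeriod σ w), Nat.mul_div_cancel' hw'.minimalPeriod_dvd]

theorem two_mul_card_sign_eq_neg_one [DecidableEq Q] (s : Q → ℤˣ) {i : ℕ} (hi : i ≠ 0)
    (htrace : ∀ j, j ∣ i →
      ∑ w with Function.IsPeriodicPt σ j w, ((orbitProd s σ j w : ℤˣ) : ℤ) = 0) :
    2 * i * (Nat.card {ν : Orbit σ // ν.length = i ∧ ν.sign s = -1} : ℤ) =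
      ∑ d ∈ i.divisors.filter (fun d => Odd d), ArithmeticFunction.moebius d *
        (Nat.card {w // Function.IsPeriodicPt σ (i / d) w} : ℤ) := by
  refine eq_sum_moebius_of_sum_odd_codivisors (G := fun j =>
    (Nat.card {w // Function.IsPeriodicPt σ j w} : ℤ)) (F := fun i =>
    2 * i * (Nat.card {ν : Orbit σ // ν.length = i ∧ ν.sign s = -1} : ℤ)) hi fun j hj => ?_
  have hj0 : j ≠ 0 := ne_zero_of_dvd_ne_zero hi hj
  rw [← sub_zero (Nat.card _ : ℤ), ← htrace j hj, card_isPeriodicPt, sum_orbitProd, Nat.cast_sum,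
    ← Finset.sum_sub_distrib]
  simp only [mul_assoc, ← Finset.mul_sum]
  rw [sum_mul_card_fiber, Finset.mul_sum, Finset.sum_filter]
  refine Finset.sum_congr rfl fun ν _ => ?_
  have hmem : ν.length ∈ j.divisors ↔ ν.length ∣ j := by simp [hj0]
  by_cases hdvd : ν.length ∣ j
  · rcases Int.units_eq_one_or (ν.sign s) with h | h
    · simp [h, hdvd]
    · rcases Nat.even_or_odd (j / ν.length) with hpar | hpar
      · simp [h, hdvd, hpar]
      · simp [h, hdvd, hmem, hpar, hpar.neg_one_pow, two_mul]
  · simp [hdvd]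

theorem card_sign_eq_one_add_card_half [DecidableEq Q] (s : Q → ℤˣ) {i : ℕ} (hi : i ≠ 0)
    (htrace : ∀ j, j ∣ i →
      ∑ w with Function.IsPeriodicPt σ j w, ((orbitProd s σ j w : ℤˣ) : ℤ) = 0) :
    Nat.card {ν : Orbit σ // ν.length = i ∧ ν.sign s = 1} +
        Nat.card {ν : Orbit σ // 2 * ν.length = i ∧ ν.sign s = -1} =
      Nat.card {ν : Orbit σ // ν.length = i ∧ ν.sign s = -1} := by
  let f (d : ℕ) : ℤ := d * Nat.card {ν : Orbit σ // ν.length = d ∧ ν.sign s = 1} +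
    d * Nat.card {ν : Orbit σ // 2 * ν.length = d ∧ ν.sign s = -1} -
    d * Nat.card {ν : Orbit σ // ν.length = d ∧ ν.sign s = -1}
  have hf : f i = 0 := eq_zero_of_sum_divisors_eq_zero hi fun j hj => by
    have hj0 : j ≠ 0 := ne_zero_of_dvd_ne_zero hi hj
    rw [← htrace j hj, sum_orbitProd]
    simp only [f, Finset.sum_sub_distrib, Finset.sum_add_distrib]
    rw [sum_mul_card_fiber length, sum_mul_card_fiber length,
      sum_mul_card_fiber fun ν : Orbit σ => 2 * ν.length, ← Finset.sum_add_distrib,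
      ← Finset.sum_sub_distrib, Finset.sum_filter]
    refine Finset.sum_congr rfl fun ν _ => ?_
    have hmem (a : ℕ) : a ∈ j.divisors ↔ a ∣ j := by simp [hj0]
    simp only [hmem]
    by_cases hdvd : ν.length ∣ j
    · rcases Int.units_eq_one_or (ν.sign s) with h | h
      · simp [h, hdvd]
      · have heven : 2 * ν.length ∣ j ↔ Even (j / ν.length) := by
          rw [even_iff_two_dvd, Nat.dvd_div_iff_mul_dvd hdvd, mul_comm]
        rcases Nat.even_or_odd (j / ν.length) with hpar | hpar
        · simp [h, hdvd, heven, hpar, two_mul (ν.length : ℤ)]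
        · simp [h, hdvd, heven, hpar.neg_one_pow, Nat.not_even_iff_odd.2 hpar]
    · have hdvd' : ¬ 2 * ν.length ∣ j := fun h => hdvd (dvd_of_mul_left_dvd h)
      simp [hdvd, hdvd']
  have hmul := sub_eq_zero.1 hf
  rw [← mul_add] at hmul
  exact_mod_cast mul_left_cancel₀ (Nat.cast_ne_zero.2 hi) hmul

end Orbit

/-! ### Signed words -/

/-- The words in the alphabet `Fin K` that are periodic with period `N`. The signs `ε` of the
letters determine the order on this type. -/
@[ext]
structure SignedWord {K : ℕ} (ε : Fin K → ℤˣ) (N : ℕ) where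
  letter : ℕ → Fin K
  periodic : Function.Periodic letter N

namespace SignedWord

variable {K N : ℕ} {ε : Fin K → ℤˣ}

/-- The first letter of a word. -/
def head (w : SignedWord ε N) : Fin K := w.letter 0

/-- The word whose letters are multiplied by the signs of the prefixes preceding them; words are
compared through it lexicographically. -/
def key (w : SignedWord ε N) : Lex (ℕ → ℤ) :=
  toLex fun j => ((∏ i ∈ Finset.range j, ε (w.letter i) : ℤˣ) : ℤ) * (w.letter j : ℕ)

theorem key_apply (w : SignedWord ε N) (j : ℕ) :
    key w j = ((∏ i ∈ Finset.range j, ε (w.letter i) : ℤˣ) : ℤ) * (w.letter j : ℕ) :=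
  rfl

theorem key_injective : Function.Injective (key (ε := ε) (N := N)) := by
  intro v w h
  refine SignedWord.ext (funext fun j => ?_)
  induction j using Nat.strong_induction_on with
  | _ j ih =>
    have hprod : ∏ i ∈ Finset.range j, ε (v.letter i) = ∏ i ∈ Finset.range j, ε (w.letter i) :=
      Finset.prod_congr rfl fun i hi => by rw [ih i (Finset.mem_range.1 hi)]
    have hj := congrFun h j
    rw [key_apply, key_apply, hprod, Units.mul_right_inj, Nat.cast_inj] at hj
    exact Fin.ext hj

instance : LinearOrder (SignedWord ε N) := LinearOrder.lift' key key_injective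

theorem lt_iff {v w : SignedWord ε N} :
    v < w ↔ ∃ j, (∀ i < j, key v i = key w i) ∧ key v j < key w j :=
  Iff.rfl

theorem key_zero (w : SignedWord ε N) : key w 0 = (w.head : ℕ) := by
  rw [key_apply, Finset.prod_range_zero, Units.val_one, one_mul, head]

theorem monotone_head : Monotone (head (ε := ε) (N := N)) := by
  refine monotone_iff_forall_lt.2 fun v w h => ?_
  obtain ⟨j, heq, hlt⟩ := lt_iff.1 h
  have hzero : key v 0 ≤ key w 0 := by
    rcases j.eq_zero_or_pos with rfl | hj
    · exact hlt.le
    · exact (heq 0 hj).le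
  rw [key_zero, key_zero] at hzero
  exact_mod_cast hzero

variable [NeZero N]

instance : Fintype (SignedWord ε N) :=
  Fintype.ofInjective (fun w (i : Fin N) => w.letter i) fun v w h =>
    SignedWord.ext (funext fun j => by
      rw [← v.periodic.map_mod_nat, ← w.periodic.map_mod_nat]
      exact congrFun h ⟨j % N, Nat.mod_lt j (NeZero.pos N)⟩)

/-- The shift of periodic words. -/
def shift : Equiv.Perm (SignedWord ε N) where
  toFun w := ⟨fun j => w.letter (j + 1), fun j => by simp only [add_right_comm j N, w.periodic _]⟩
  invFun w := ⟨fun j => w.letter (j + (N - 1)), fun j => by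
    simp only [add_right_comm j N, w.periodic _]⟩
  left_inv w := SignedWord.ext (funext fun j => by
    simp only [add_assoc, Nat.sub_add_cancel (NeZero.one_le : 1 ≤ N), w.periodic j])
  right_inv w := SignedWord.ext (funext fun j => by
    simp only [add_assoc, add_comm 1, Nat.sub_add_cancel (NeZero.one_le : 1 ≤ N), w.periodic j])

theorem letter_iterate_shift (w : SignedWord ε N) (i j : ℕ) :
    (shift^[i] w).letter j = w.letter (j + i) := by
  induction i generalizing w with
  | zero => rfl
  | succ i ih =>
    rw [Function.iterate_succ_apply, ih]
    exact congrArg w.letter (add_assoc _ _ _)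

theorem head_iterate_shift (w : SignedWord ε N) (i : ℕ) : (shift^[i] w).head = w.letter i := by
  rw [head, letter_iterate_shift, zero_add]

theorem key_succ (w : SignedWord ε N) (j : ℕ) :
    key w (j + 1) = (ε w.head : ℤ) * key (shift w) j := by
  rw [key_apply, key_apply, Finset.prod_range_succ', mul_comm (Finset.prod _ _), Units.val_mul,
    mul_assoc]
  rfl

theorem exists_key_shift_lt {v w : SignedWord ε N} (h : v.head = w.head) (hlt : v < w) :
    ∃ j, (∀ i < j, key (shift v) i = key (shift w) i) ∧
      (ε v.head : ℤ) * key (shift v) j < (ε v.head : ℤ) * key (shift w) j := by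
  obtain ⟨_ | j, heq, hkey⟩ := lt_iff.1 hlt
  · exact absurd hkey (by rw [key_zero, key_zero, h]; exact lt_irrefl _)
  · rw [key_succ, key_succ, ← h] at hkey
    refine ⟨j, fun i hi => ?_, hkey⟩
    have := heq (i + 1) (Nat.succ_lt_succ hi)
    rwa [key_succ, key_succ, ← h, Units.mul_right_inj] at this

theorem separatedSystem_shift : SeparatedSystem ε (shift (ε := ε) (N := N)) head where
  monotone := monotone_head
  strictMonoOn c hc v hv w hw h := by
    obtain ⟨j, heq, hlt⟩ := exists_key_shift_lt (hv.trans hw.symm) h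
    rw [hv, hc, Units.val_one, one_mul, one_mul] at hlt
    exact lt_iff.2 ⟨j, heq, hlt⟩
  strictAntiOn c hc v hv w hw h := by
    obtain ⟨j, heq, hlt⟩ := exists_key_shift_lt (hv.trans hw.symm) h
    rw [hv, hc, Units.val_neg, Units.val_one, neg_one_mul, neg_one_mul, neg_lt_neg_iff] at hlt
    exact lt_iff.2 ⟨j, fun i hi => (heq i hi).symm, hlt⟩
  separated v w h := SignedWord.ext (funext fun j => by
    rw [← head_iterate_shift, h, head_iterate_shift])

theorem orbitProd_shift (w : SignedWord ε N) (j : ℕ) :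
    orbitProd (ε ∘ head) shift j w = ∏ i ∈ Finset.range j, ε (w.letter i) :=
  Finset.prod_congr rfl fun i _ => congrArg ε (head_iterate_shift w i)

theorem isPeriodicPt_shift_iff {w : SignedWord ε N} {j : ℕ} :
    Function.IsPeriodicPt shift j w ↔ Function.Periodic w.letter j := by
  simp only [Function.IsPeriodicPt, Function.IsFixedPt, SignedWord.ext_iff, funext_iff,
    letter_iterate_shift, Function.Periodic]

/-- A word that is periodic with a divisor `j` of `N` as a period is a repeated block of length
`j`. -/
def equivBlock {j : ℕ} [NeZero j] (hj : j ∣ N) :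
    {w : SignedWord ε N // Function.IsPeriodicPt shift j w} ≃ (Fin j → Fin K) where
  toFun w i := w.1.letter i
  invFun p := ⟨⟨fun i => p (Fin.ofNat j i), fun i => congrArg p (Fin.ext (by
    obtain ⟨k, hk⟩ := hj
    simp [hk]))⟩, isPeriodicPt_shift_iff.2 fun i => congrArg p (Fin.ext (by simp))⟩
  left_inv w := Subtype.ext (SignedWord.ext (funext fun i =>
    (isPeriodicPt_shift_iff.1 w.2).map_mod_nat i))
  right_inv p := funext fun i => congrArg p (Fin.ofNat_val_eq_self i)

theorem sum_isPeriodicPt_shift {R : Type*} [CommSemiring R] (φ : Fin K → R) {j : ℕ} [NeZero j]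
    (hj : j ∣ N) :
    ∑ w : SignedWord ε N with Function.IsPeriodicPt shift j w,
      ∏ i ∈ Finset.range j, φ (w.letter i) = (∑ c, φ c) ^ j := by
  rw [Fintype.sum_pow, ← (equivBlock hj).sum_comp,
    Finset.sum_subtype _ (p := fun w => Function.IsPeriodicPt shift j w)]
  · exact Finset.sum_congr rfl fun w _ => Finset.prod_range fun i => φ (w.1.letter i)
  · simp

theorem card_isPeriodicPt_shift {j : ℕ} [NeZero j] (hj : j ∣ N) :
    Nat.card {w : SignedWord ε N // Function.IsPeriodicPt shift j w} = K ^ j := by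
  rw [Nat.card_congr (equivBlock hj), Nat.card_fun, Nat.card_fin, Nat.card_fin]

end SignedWord

namespace SignedWord

variable {α : Type*} {K N : ℕ} {ε : Fin K → ℤˣ}

/-- The word of the `f`-values met along the orbit of a point under a permutation `π` whose order
divides `N`. -/
def itinerary (ε : Fin K → ℤˣ) {π : Equiv.Perm α} (hπ : orderOf π ∣ N) (f : α → Fin K) (x : α) :
    SignedWord ε N where
  letter j := f ((π ^ j) x)
  periodic j := by
    simp only [pow_add, orderOf_dvd_iff_pow_eq_one.1 hπ, mul_one]

variable [NeZero N]

theorem letter_eq_head_of_semiconj {π : Equiv.Perm α} {W : α → SignedWord ε N}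
    (hW : Function.Semiconj W π shift) (x : α) (j : ℕ) : (W x).letter j = (W ((π ^ j) x)).head := by
  rw [← head_iterate_shift, ← Equiv.Perm.iterate_eq_pow, (hW.iterate_right j).eq]

/-- Labelings and equivariant maps into words determine each other through itineraries. -/
def equivSemiconj (ε : Fin K → ℤˣ) {π : Equiv.Perm α} (hπ : orderOf π ∣ N) :
    (α → Fin K) ≃ {W : α → SignedWord ε N // Function.Semiconj W π shift} where
  toFun f := ⟨itinerary ε hπ f, fun x => SignedWord.ext (funext fun j => by
    simp only [itinerary, shift, Equiv.coe_fn_mk, pow_succ, Equiv.Perm.mul_apply])⟩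
  invFun W := head ∘ W.1
  left_inv f := rfl
  right_inv W := Subtype.ext (funext fun x => SignedWord.ext (funext fun j =>
    (letter_eq_head_of_semiconj W.2 x j).symm))

theorem card_signedMonotone_eq_card_semiconj [LinearOrder α] {π : Equiv.Perm α}
    (hπ : orderOf π ∣ N) :
    Nat.card {f : α → Fin K // SignedMonotone ε π f} =
      Nat.card {W : α → SignedWord ε N //
        Function.Semiconj W π shift ∧ SignedMonotone (ε ∘ head) π W} := by
  refine Nat.card_congr (((equivSemiconj ε hπ).subtypeEquiv fun f => ?_).trans
    (Equiv.subtypeSubtypeEquivSubtypeInter _ _))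
  exact separatedSystem_shift.signedMonotone_comp_iff (equivSemiconj ε hπ f).2

theorem sum_orbitProd_shift_eq_zero (hε : ∑ c, (ε c : ℤ) = 0) {j : ℕ} (hj0 : j ≠ 0)
    (hj : j ∣ N) :
    ∑ w : SignedWord ε N with Function.IsPeriodicPt shift j w,
      ((orbitProd (ε ∘ head) shift j w : ℤˣ) : ℤ) = 0 := by
  have : NeZero j := ⟨hj0⟩
  simp only [orbitProd_shift, Units.coe_prod]
  rw [sum_isPeriodicPt_shift (fun c => (ε c : ℤ)) hj, hε, zero_pow hj0]

theorem two_mul_card_sign_shift_eq_neg_one (hε : ∑ c, (ε c : ℤ) = 0) {i : ℕ} (hi0 : i ≠ 0)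
    (hi : i ∣ N) :
    2 * i * (Nat.card {ν : Orbit (shift (ε := ε) (N := N)) //
        ν.length = i ∧ ν.sign (ε ∘ head) = -1} : ℤ) =
      ∑ d ∈ i.divisors.filter (fun d => Odd d),
        ArithmeticFunction.moebius d * (K : ℤ) ^ (i / d) := by
  rw [Orbit.two_mul_card_sign_eq_neg_one (ε ∘ head) hi0 fun j hj =>
    sum_orbitProd_shift_eq_zero hε (ne_zero_of_dvd_ne_zero hi0 hj) (hj.trans hi)]
  refine Finset.sum_congr rfl fun d hd => ?_
  have hdi : i / d ∣ i := Nat.div_dvd_of_dvd (Nat.dvd_of_mem_divisors (Finset.mem_filter.1 hd).1)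
  have : NeZero (i / d) := ⟨ne_zero_of_dvd_ne_zero hi0 hdi⟩
  rw [card_isPeriodicPt_shift (hdi.trans hi), Nat.cast_pow]

theorem card_sign_shift_eq_one_add_card_half (hε : ∑ c, (ε c : ℤ) = 0) {i : ℕ} (hi0 : i ≠ 0)
    (hi : i ∣ N) :
    Nat.card {ν : Orbit (shift (ε := ε) (N := N)) // ν.length = i ∧ ν.sign (ε ∘ head) = 1} +
        Nat.card {ν : Orbit (shift (ε := ε) (N := N)) //
          2 * ν.length = i ∧ ν.sign (ε ∘ head) = -1} =
      Nat.card {ν : Orbit (shift (ε := ε) (N := N)) //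
        ν.length = i ∧ ν.sign (ε ∘ head) = -1} :=
  Orbit.card_sign_eq_one_add_card_half (ε ∘ head) hi0 fun _ hj =>
    sum_orbitProd_shift_eq_zero hε (ne_zero_of_dvd_ne_zero hi0 hj) (hj.trans hi)

end SignedWord

theorem sum_filter_card_subtype {α β : Type*} [Fintype α] [Finite β] (P : α → Prop)
    [DecidablePred P] (R : α → β → Prop) :
    ∑ a ∈ Finset.univ.filter P, Nat.card {b // R a b} =
      Nat.card {p : α × β // R p.1 p.2 ∧ P p.1} := by
  rw [Nat.card_congr (Equiv.subtypeProdEquivSigmaSubtype fun a b => R a b ∧ P a), Nat.card_sigma,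
    Finset.sum_filter]
  refine Finset.sum_congr rfl fun a _ => ?_
  by_cases h : P a <;> simp [h]

theorem sum_card_signedMonotone_eq_prod_Ncoef {K n : ℕ} {ε : Fin K → ℤˣ}
    (hε : ∑ c, (ε c : ℤ) = 0) {m g : ℕ → ℕ} (hm0 : m 0 = 0) (hm : ∀ i, n < i → m i = 0)
    (hsum : ∑ i ∈ Finset.Icc 1 n, i * m i = n)
    (hg : ∀ i : ℕ, 1 ≤ i → (2 * i : ℤ) * g i = ∑ d ∈ i.divisors.filter (fun d => Odd d),
      ArithmeticFunction.moebius d * (K : ℤ) ^ (i / d)) :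
    ∑ π ∈ Finset.univ.filter fun π : Equiv.Perm (Fin n) =>
        ∀ i, (fullCycleType n π).count i = m i,
        (Nat.card {f : Fin n → Fin K // SignedMonotone ε π f} : ℚ) =
      ∏ i ∈ (Finset.Icc 1 n).filter (fun i => 1 ≤ m i), Ncoef (g i) (m i) := by
  have : NeZero n.factorial := ⟨n.factorial_ne_zero⟩
  have hdvd {i : ℕ} (hi : i ∈ Finset.Icc 1 n) : i ≠ 0 ∧ i ∣ n.factorial := by
    obtain ⟨hi1, hin⟩ := Finset.mem_Icc.1 hi
    exact ⟨Nat.ne_of_gt hi1, Nat.dvd_factorial hi1 hin⟩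
  have hneg (i : ℕ) (hi : i ∈ Finset.Icc 1 n) :
      Nat.card {ν : Orbit (SignedWord.shift (ε := ε) (N := n.factorial)) //
        ν.length = i ∧ ν.sign (ε ∘ SignedWord.head) = -1} = g i := by
    have hi0 : (2 * i : ℤ) ≠ 0 := by exact_mod_cast mul_ne_zero two_ne_zero (hdvd hi).1
    exact_mod_cast mul_left_cancel₀ hi0 ((SignedWord.two_mul_card_sign_shift_eq_neg_one hε
      (hdvd hi).1 (hdvd hi).2).trans (hg i (Finset.mem_Icc.1 hi).1).symm)
  rw [← card_signedMonotone_semiconj_eq_prod_Ncoef (ε ∘ SignedWord.head) SignedWord.shift hm0 hm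
    hsum hneg fun i hi => (SignedWord.card_sign_shift_eq_one_add_card_half hε (hdvd hi).1
      (hdvd hi).2).trans (hneg i hi)]
  have hπ (π : Equiv.Perm (Fin n)) : orderOf π ∣ n.factorial := by
    simpa only [Fintype.card_perm, Fintype.card_fin] using orderOf_dvd_card (x := π)
  simp only [SignedWord.card_signedMonotone_eq_card_semiconj (hπ _)]
  rw [← Nat.cast_sum, sum_filter_card_subtype]
  exact congrArg _ (Nat.card_congr (Equiv.subtypeEquivRight fun p => and_assoc))

theorem sum_paritySign (k : ℕ) : ∑ c : Fin (2 * k), (paritySign c : ℤ) = 0 := by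
  simp only [paritySign, Units.val_pow_eq_pow_val, Units.val_neg, Units.val_one]
  rw [Fin.sum_univ_eq_sum_range fun c => (-1 : ℤ) ^ (c + 1)]
  simp only [pow_succ, ← Finset.sum_mul]
  rw [neg_one_geom_sum, if_pos (even_two_mul k), zero_mul]

end

theorem stmt19 (n : ℕ) (hn : 1 ≤ n) (m : ℕ → ℕ)
    (hm0 : m 0 = 0) (hmhigh : ∀ i, n < i → m i = 0)
    (hsum : ∑ i ∈ Finset.Icc 1 n, i * m i = n)
    (g : ℕ → ℕ → ℕ)
    (hg : ∀ i : ℕ, 1 ≤ i → ∀ k : ℕ,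
      (2 * i : ℤ) * (g i k : ℤ)
        = ∑ d ∈ i.divisors.filter (fun d => Odd d),
            ArithmeticFunction.moebius d * (2 * k : ℤ) ^ (i / d)) :
    PowerSeries.C (R := ℚ) (1 / 2)
        * ∑ π ∈ (Finset.univ.filter fun π : Equiv.Perm (Fin n) =>
            ∀ i, Multiset.count i (fullCycleType n π) = m i),
            (4 : PowerSeries ℚ) ^ (pk n π + 1) * PowerSeries.X ^ (pk n π + 1)
              * (1 + PowerSeries.X) ^ (n - 1 - 2 * pk n π)
      = (1 - PowerSeries.X) ^ (n + 1)
          * PowerSeries.mk (fun k =>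
              ∏ i ∈ (Finset.Icc 1 n).filter (fun i => 1 ≤ m i),
                Ncoef (g i k) (m i)) := by
  obtain ⟨l, rfl⟩ := Nat.exists_eq_add_of_le' hn
  simp only [Finset.mul_sum, Nat.add_sub_cancel, half_peak_monomial_eq]
  rw [← Finset.mul_sum]
  congr 1
  ext k
  rw [map_sum]
  simp only [PowerSeries.coeff_mk]
  exact sum_card_signedMonotone_eq_prod_Ncoef (sum_paritySign k) hm0 hmhigh hsum
    fun i hi => by exact_mod_cast hg i hi k

end
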